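/- arXiv:1410.7910 — 3 statements merged into one kernel-verified Lean document; each statement's English description precedes it below -/
import Mathlib

section
/- For every m ≥ 1, the numbers of short circuits in the random cubic configuration-model multigraph converge jointly in distribution to independent Poisson random variables with means λ_i = 2^i/(2i): for all natural numbers j_1, …, j_m, the proportion of ω ∈ Ω_N with X_{N,i}(ω) = j_i for every i = 1, …, m converges, as N → ∞ through even values of N, to ∏_{i=1}^{m} e^{-λ_i}·λ_i^{j_i}/(j_i !), where λ_i = 2^i/(2i). -/
open Filter Real Topology

/-- `Omega N`: the perfect matchings of the `3N` half-edges, i.e. fixed-point-free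
involutions of `Fin (3N)`. -/
def Omega (N : ℕ) : Type := {ω : Equiv.Perm (Fin (3 * N)) // ∀ a, ω (ω a) = a ∧ ω a ≠ a}

instance (N : ℕ) : Fintype (Omega N) := by unfold Omega; exact Subtype.fintype _

/-- The block (vertex) containing a half-edge: `B_v = {3v, 3v+1, 3v+2}`. -/
def blk {N : ℕ} (a : Fin (3 * N)) : Fin N := ⟨a.val / 3, by have := a.isLt; omega⟩

/-- The multiplicity of the pair of blocks `{u, v}` in the multigraph `Γ(ω)`:
for `u ≠ v` the number of half-edges in `B_u` matched into `B_v`; for `u = v`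
the number of matched pairs contained in `B_u` (loops at `u`). -/
noncomputable def mult {N : ℕ} (ω : Omega N) (u v : Fin N) : ℕ :=
  if u = v then Nat.card {a : Fin (3 * N) // blk a = u ∧ blk (ω.val a) = u} / 2
  else Nat.card {a : Fin (3 * N) // blk a = u ∧ blk (ω.val a) = v}

/-- `X_{N,1}`: the number of matched pairs contained in a single block (loops).
Each such pair `{a, ω a}` contributes its two half-edges, whence the division by 2. -/
noncomputable def X1 {N : ℕ} (ω : Omega N) : ℕ :=
  Nat.card {a : Fin (3 * N) // blk (ω.val a) = blk a} / 2

/-- `X_{N,2}`: the number of unordered pairs of distinct matched pairs joining the same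
two distinct blocks: over each unordered pair of distinct blocks of multiplicity `m`
there are `C(m, 2)` such pairs of parallel edges. -/
noncomputable def X2 {N : ℕ} (ω : Omega N) : ℕ :=
  ∑ u : Fin N, ∑ v : Fin N, if u < v then Nat.choose (mult ω u v) 2 else 0

/-- `X_{N,k}` for `k ≥ 3`: the number of `k`-cycles of `Γ(ω)`.  A `k`-cycle is counted
via its `2k` rooted directed traversals: a traversal is an injective cyclic sequence of
blocks `c : ZMod k → Fin N` together with half-edges `h i ∈ B_{c i}` matched into
`B_{c (i+1)}`. -/
noncomputable def Xcyc {N : ℕ} (k : ℕ) (ω : Omega N) : ℕ :=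
  Nat.card {p : (ZMod k → Fin N) × (ZMod k → Fin (3 * N)) //
    Function.Injective p.1 ∧
      ∀ i, blk (p.2 i) = p.1 i ∧ blk (ω.val (p.2 i)) = p.1 (i + 1)} / (2 * k)

/-- The circuit-counting random variables `X_{N,k}`. -/
noncomputable def X {N : ℕ} (ω : Omega N) : ℕ → ℕ
  | 1 => X1 ω
  | 2 => X2 ω
  | k => Xcyc k ω

namespace CP
open scoped Classical

abbrev HE (N : ℕ) := Fin (3 * N)

/-- Conjugation of a matching by a transposition. -/
noncomputable def cj {N : ℕ} (c b : HE N) (ω : Omega N) : Omega N :=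
  ⟨Equiv.swap c b * ω.1 * Equiv.swap c b, by
    intro a
    have h := ω.2 (Equiv.swap c b a)
    refine ⟨by simp [h.1], ?_⟩
    intro h2
    apply h.2
    simp only [Equiv.Perm.mul_apply] at h2
    rw [Equiv.swap_apply_eq_iff] at h2
    exact h2⟩

lemma cj_apply {N : ℕ} (c b : HE N) (ω : Omega N) (x : HE N) :
    (cj c b ω).1 x = Equiv.swap c b (ω.1 (Equiv.swap c b x)) := rfl

lemma cj_cj {N : ℕ} (c b : HE N) (ω : Omega N) : cj c b (cj c b ω) = ω := by
  apply Subtype.ext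
  ext x
  simp [cj_apply]

lemma inv_eq {N : ℕ} (ω : Omega N) {x y : HE N} (h : ω.1 x = y) : ω.1 y = x := by
  rw [← h]; exact (ω.2 x).1

lemma cj_of_ne {N : ℕ} (c b : HE N) (ω : Omega N) {x : HE N} (h1 : x ≠ c) (h2 : x ≠ b)
    (h3 : ω.1 x ≠ c) (h4 : ω.1 x ≠ b) : (cj c b ω).1 x = ω.1 x := by
  rw [cj_apply, Equiv.swap_apply_of_ne_of_ne h1 h2, Equiv.swap_apply_of_ne_of_ne h3 h4]

/-- Matchings containing all the pairs of `M`. -/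
noncomputable def OM {N : ℕ} (M : Finset (HE N × HE N)) : Finset (Omega N) :=
  Finset.univ.filter (fun ω => ∀ p ∈ M, ω.1 p.1 = p.2)

noncomputable def V {N : ℕ} (M : Finset (HE N × HE N)) : Finset (HE N) :=
  M.image Prod.fst ∪ M.image Prod.snd

lemma mem_OM {N : ℕ} {M : Finset (HE N × HE N)} {ω : Omega N} :
    ω ∈ OM M ↔ ∀ p ∈ M, ω.1 p.1 = p.2 := by simp [OM]

lemma mem_V_of {N : ℕ} {M : Finset (HE N × HE N)} {p : HE N × HE N} (h : p ∈ M) :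
    p.1 ∈ V M ∧ p.2 ∈ V M := by
  unfold V
  exact ⟨Finset.mem_union_left _ (Finset.mem_image_of_mem _ h),
    Finset.mem_union_right _ (Finset.mem_image_of_mem _ h)⟩

lemma mem_V {N : ℕ} {M : Finset (HE N × HE N)} {x : HE N} :
    x ∈ V M ↔ ∃ p ∈ M, p.1 = x ∨ p.2 = x := by
  unfold V
  simp only [Finset.mem_union, Finset.mem_image]
  constructor
  · rintro (⟨p, h, rfl⟩ | ⟨p, h, rfl⟩)
    · exact ⟨p, h, Or.inl rfl⟩
    · exact ⟨p, h, Or.inr rfl⟩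
  · rintro ⟨p, h, (rfl | rfl)⟩
    · exact Or.inl ⟨p, h, rfl⟩
    · exact Or.inr ⟨p, h, rfl⟩

lemma pair_of_mem_V {N : ℕ} {M : Finset (HE N × HE N)} {ω : Omega N} (h : ω ∈ OM M)
    {x : HE N} (hx : x ∈ V M) : (x, ω.1 x) ∈ M ∨ (ω.1 x, x) ∈ M := by
  rw [mem_V] at hx
  rw [mem_OM] at h
  obtain ⟨p, hp, (rfl | rfl)⟩ := hx
  · left; rw [h p hp]; exact hp
  · right; rw [inv_eq ω (h p hp)]; exact hp

lemma V_closed {N : ℕ} {M : Finset (HE N × HE N)} {ω : Omega N} (h : ω ∈ OM M)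
    {x : HE N} (hx : x ∈ V M) : ω.1 x ∈ V M := by
  rcases pair_of_mem_V h hx with h | h
  · exact (mem_V_of h).2
  · exact (mem_V_of h).1

lemma V_closed' {N : ℕ} {M : Finset (HE N × HE N)} {ω : Omega N} (h : ω ∈ OM M)
    {x : HE N} (hx : ω.1 x ∈ V M) : x ∈ V M := by
  have := V_closed h hx
  rwa [(ω.2 x).1] at this

lemma V_card {N : ℕ} (M : Finset (HE N × HE N)) : (V M).card ≤ 2 * M.card := by
  have h1 : (M.image Prod.fst).card ≤ M.card := Finset.card_image_le
  have h2 : (M.image Prod.snd).card ≤ M.card := Finset.card_image_le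
  have h3 := Finset.card_union_le (M.image Prod.fst) (M.image Prod.snd)
  unfold V
  omega

/-- available partners -/
noncomputable def Cs {N : ℕ} (M : Finset (HE N × HE N)) (a : HE N) : Finset (HE N) :=
  Finset.univ \ insert a (V M)

lemma mem_Cs {N : ℕ} {M : Finset (HE N × HE N)} {a c : HE N} :
    c ∈ Cs M a ↔ c ≠ a ∧ c ∉ V M := by
  simp [Cs]

lemma Cs_card_le {N : ℕ} (M : Finset (HE N × HE N)) (a : HE N) : (Cs M a).card ≤ 3 * N := by
  have := Finset.card_le_univ (Cs M a)
  simpa using this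

lemma Cs_card_ge {N : ℕ} (M : Finset (HE N × HE N)) (a : HE N) :
    3 * N ≤ (Cs M a).card + 2 * M.card + 1 := by
  have h := Finset.le_card_sdiff (insert a (V M)) (Finset.univ : Finset (HE N))
  have h2 := Finset.card_insert_le a (V M)
  have h3 := V_card M
  have h4 : (Finset.univ : Finset (HE N)).card = 3 * N := by simp
  unfold Cs
  omega

lemma step_bij {N : ℕ} (M : Finset (HE N × HE N)) (a b : HE N) (ha : a ∉ V M) (hb : b ∉ V M)
    (hab : a ≠ b) (Q : Omega N → Prop) :
    ((OM M).filter Q).card =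
      ((Cs M a ×ˢ OM (insert (a, b) M)).filter (fun p => Q (cj p.1 b p.2))).card := by
  have key : ∀ ω ∈ OM M, ∀ c, c ∉ V M → ∀ p ∈ M, (cj c b ω).1 p.1 = p.2 := by
    intro ω hω c hc p hp
    have h1 := mem_V_of hp
    have h2 : ω.1 p.1 = p.2 := mem_OM.1 hω p hp
    rw [cj_of_ne, h2]
    · rintro rfl; exact hc h1.1
    · rintro rfl; exact hb h1.1
    · rw [h2]; rintro rfl; exact hc h1.2
    · rw [h2]; rintro rfl; exact hb h1.2
  refine Finset.card_bij' (fun ω _ => (ω.1 a, cj (ω.1 a) b ω)) (fun p _ => cj p.1 b p.2) ?_ ?_ ?_ ?_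
  · intro ω hω
    rw [Finset.mem_filter] at hω
    have hc : ω.1 a ∉ V M := fun h => ha (V_closed' hω.1 h)
    simp only [Finset.mem_filter, Finset.mem_product, mem_Cs, cj_cj]
    refine ⟨⟨⟨(ω.2 a).2, hc⟩, ?_⟩, hω.2⟩
    rw [mem_OM]
    intro p hp
    rw [Finset.mem_insert] at hp
    rcases hp with rfl | hp
    · simp only [cj_apply]
      rw [Equiv.swap_apply_of_ne_of_ne (ω.2 a).2.symm hab, Equiv.swap_apply_left]
    · exact key ω hω.1 _ hc p hp
  · rintro ⟨c, ω⟩ h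
    simp only [Finset.mem_filter, Finset.mem_product, mem_Cs] at h
    rw [Finset.mem_filter]
    refine ⟨?_, h.2⟩
    rw [mem_OM]
    refine key ω ?_ c h.1.1.2
    rw [mem_OM]
    intro p hp
    exact mem_OM.1 h.1.2 p (Finset.mem_insert_of_mem hp)
  · intro ω hω
    simp [cj_cj]
  · rintro ⟨c, ω⟩ h
    simp only [Finset.mem_filter, Finset.mem_product, mem_Cs] at h
    have h1 : ω.1 a = b := mem_OM.1 h.1.2 (a, b) (Finset.mem_insert_self _ _)
    have h2 : (cj c b ω).1 a = c := by
      rw [cj_apply, Equiv.swap_apply_of_ne_of_ne h.1.1.1.symm hab, h1, Equiv.swap_apply_right]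
    simp only [h2, cj_cj]

lemma step_card {N : ℕ} (M : Finset (HE N × HE N)) (a b : HE N) (ha : a ∉ V M) (hb : b ∉ V M)
    (hab : a ≠ b) : (OM M).card = (Cs M a).card * (OM (insert (a, b) M)).card := by
  have := step_bij M a b ha hb hab (fun _ => True)
  simpa using this

end CP

namespace CP
open scoped Classical

/-- rooted (n+1)-traversals (templates) -/
def IsT {N : ℕ} (n : ℕ) (u : ZMod (n + 1) → HE N × HE N) : Prop :=
  Function.Injective (fun i => blk (u i).1) ∧
    ∀ i, (u i).1 ≠ (u i).2 ∧ blk (u i).1 = blk (u i).2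

/-- the traversal is contained in the matching -/
def Sub {N n : ℕ} (u : ZMod (n + 1) → HE N × HE N) (ω : Omega N) : Prop :=
  ∀ i, ω.1 (u i).1 = (u (i + 1)).2

noncomputable def Tset {N : ℕ} (n : ℕ) (ω : Omega N) : Finset (ZMod (n + 1) → HE N × HE N) :=
  Finset.univ.filter (fun u => IsT n u ∧ Sub u ω)

/-- edges of a traversal -/
noncomputable def Ed {N n : ℕ} (u : ZMod (n + 1) → HE N × HE N) (I : Finset (ZMod (n + 1))) :
    Finset (HE N × HE N) := I.image (fun i => ((u i).1, (u (i + 1)).2))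

lemma IsT.fst_inj {N n : ℕ} {u : ZMod (n + 1) → HE N × HE N} (h : IsT n u) {i j : ZMod (n + 1)}
    (hij : (u i).1 = (u j).1) : i = j := h.1 (by simp [hij])

lemma IsT.snd_inj {N n : ℕ} {u : ZMod (n + 1) → HE N × HE N} (h : IsT n u) {i j : ZMod (n + 1)}
    (hij : (u i).2 = (u j).2) : i = j := h.1 (by simp [(h.2 _).2, hij])

lemma IsT.fst_ne_snd {N n : ℕ} {u : ZMod (n + 1) → HE N × HE N} (h : IsT n u)
    (i j : ZMod (n + 1)) : (u i).1 ≠ (u j).2 := by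
  intro hij
  have : i = j := h.1 (by simp [(h.2 j).2, hij])
  subst this
  exact (h.2 i).1 hij

lemma mem_V_Ed {N n : ℕ} {u : ZMod (n + 1) → HE N × HE N} {I : Finset (ZMod (n + 1))} {x : HE N} :
    x ∈ V (Ed u I) ↔ ∃ i ∈ I, (u i).1 = x ∨ (u (i + 1)).2 = x := by
  rw [mem_V]; simp [Ed]

lemma V_union {N : ℕ} (M M' : Finset (HE N × HE N)) : V (M ∪ M') = V M ∪ V M' := by
  ext x
  simp only [Finset.mem_union, mem_V]
  constructor
  · rintro ⟨p, h | h, h'⟩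
    · exact Or.inl ⟨p, h, h'⟩
    · exact Or.inr ⟨p, h, h'⟩
  · rintro (⟨p, h, h'⟩ | ⟨p, h, h'⟩)
    · exact ⟨p, Or.inl h, h'⟩
    · exact ⟨p, Or.inr h, h'⟩

lemma Ed_insert {N n : ℕ} (u : ZMod (n + 1) → HE N × HE N) (I : Finset (ZMod (n + 1)))
    (i : ZMod (n + 1)) : Ed u (insert i I) = insert ((u i).1, (u (i + 1)).2) (Ed u I) := by
  simp [Ed, Finset.image_insert]

lemma Ed_card {N n : ℕ} (u : ZMod (n + 1) → HE N × HE N) (I : Finset (ZMod (n + 1))) :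
    (Ed u I).card ≤ I.card := Finset.card_image_le

lemma fresh {N n : ℕ} {u : ZMod (n + 1) → HE N × HE N} (hu : IsT n u)
    {I : Finset (ZMod (n + 1))} {i : ZMod (n + 1)} (hi : i ∉ I) :
    (u i).1 ∉ V (Ed u I) ∧ (u (i + 1)).2 ∉ V (Ed u I) := by
  constructor
  · rw [mem_V_Ed]
    rintro ⟨j, hj, h | h⟩
    · exact hi (hu.fst_inj h ▸ hj)
    · exact hu.fst_ne_snd _ _ h.symm
  · rw [mem_V_Ed]
    rintro ⟨j, hj, h | h⟩
    · exact hu.fst_ne_snd _ _ h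
    · have := add_right_cancel (hu.snd_inj h)
      exact hi (this ▸ hj)

lemma ext_card {N n : ℕ} {u : ZMod (n + 1) → HE N × HE N} (hu : IsT n u)
    (M : Finset (HE N × HE N)) (I : Finset (ZMod (n + 1)))
    (hI : ∀ i ∈ I, (u i).1 ∉ V M ∧ (u (i + 1)).2 ∉ V M) (D : ℕ)
    (hD : D + 2 * (M.card + I.card) + 1 ≤ 3 * N) :
    D ^ I.card * (OM (M ∪ Ed u I)).card ≤ (OM M).card ∧
      (OM M).card ≤ (3 * N) ^ I.card * (OM (M ∪ Ed u I)).card := by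
  induction I using Finset.induction_on with
  | empty => simp [Ed]
  | insert i I hi ih =>
    have h1 := ih (fun j hj => hI j (Finset.mem_insert_of_mem hj))
      (by rw [Finset.card_insert_of_notMem hi] at hD; omega)
    have hf := fresh hu hi
    have hii := hI i (Finset.mem_insert_self _ _)
    have h2 := step_card (M ∪ Ed u I) (u i).1 (u (i + 1)).2
      (by rw [V_union, Finset.mem_union]; tauto) (by rw [V_union, Finset.mem_union]; tauto)
      (hu.fst_ne_snd _ _)
    rw [Ed_insert, Finset.union_insert, Finset.card_insert_of_notMem hi]
    rw [Finset.card_insert_of_notMem hi] at hD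
    have h3 := Cs_card_le (M ∪ Ed u I) (u i).1
    have h4 := Cs_card_ge (M ∪ Ed u I) (u i).1
    have h5 := Finset.card_union_le M (Ed u I)
    have h6 := Ed_card u I
    have h7 : D ≤ (Cs (M ∪ Ed u I) (u i).1).card := by omega
    rw [h2] at h1
    constructor
    · calc _ = D ^ I.card * (D * (OM (insert ((u i).1, (u (i + 1)).2) (M ∪ Ed u I))).card) := by ring
        _ ≤ _ := Nat.mul_le_mul_left _ (Nat.mul_le_mul_right _ h7)
        _ ≤ _ := h1.1
    · calc _ ≤ _ := h1.2
        _ ≤ (3 * N) ^ I.card * ((3 * N) *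
          (OM (insert ((u i).1, (u (i + 1)).2) (M ∪ Ed u I))).card) :=
            Nat.mul_le_mul_left _ (Nat.mul_le_mul_right _ h3)
        _ = _ := by ring

/-- number of vertices of `u` outside `B` -/
noncomputable def fr {N n : ℕ} (B : Finset (Fin N)) (u : ZMod (n + 1) → HE N × HE N) : ℕ :=
  (Finset.univ.filter (fun i => blk (u i).1 ∉ B)).card

lemma fr_shift {N n : ℕ} (B : Finset (Fin N)) {u : ZMod (n + 1) → HE N × HE N} (hu : IsT n u) :
    fr B u = (Finset.univ.filter (fun i => blk (u (i + 1)).2 ∉ B)).card := by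
  unfold fr
  refine Finset.card_bij' (fun i _ => i - 1) (fun i _ => i + 1) ?_ ?_ ?_ ?_
  · intro i hi; simpa [← (hu.2 i).2] using hi
  · intro i hi; simpa [(hu.2 (i + 1)).2] using hi
  · intro i _; simp
  · intro i _; simp

/-- all edges of `u` are edges of `t` -/
def Inside {N n k : ℕ} (u : ZMod (n + 1) → HE N × HE N) (t : ZMod (k + 1) → HE N × HE N) : Prop :=
  ∀ i, ∃ j, ((u i).1 = (t j).1 ∧ (u (i + 1)).2 = (t (j + 1)).2) ∨
    ((u i).1 = (t (j + 1)).2 ∧ (u (i + 1)).2 = (t j).1)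

/-- the blocks of `t` -/
noncomputable def Bl {N k : ℕ} (t : ZMod (k + 1) → HE N × HE N) : Finset (Fin N) :=
  Finset.univ.image (fun i => blk (t i).1)

lemma Bl_card {N k : ℕ} (t : ZMod (k + 1) → HE N × HE N) : (Bl t).card ≤ k + 1 := by
  have : (Bl t).card ≤ (Finset.univ : Finset (ZMod (k + 1))).card := Finset.card_image_le
  simpa [ZMod.card] using this

lemma mem_Bl {N k : ℕ} (t : ZMod (k + 1) → HE N × HE N) (i) : blk (t i).1 ∈ Bl t :=
  Finset.mem_image_of_mem _ (Finset.mem_univ _)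

lemma mem_Bl' {N k : ℕ} {t : ZMod (k + 1) → HE N × HE N} (ht : IsT k t) (i) :
    blk (t i).2 ∈ Bl t := by rw [← (ht.2 i).2]; exact mem_Bl t i

lemma V_Bl {N k : ℕ} {t : ZMod (k + 1) → HE N × HE N} (ht : IsT k t) {J} {x : HE N}
    (hx : x ∈ V (Ed t J)) : blk x ∈ Bl t := by
  rw [mem_V_Ed] at hx
  obtain ⟨i, _, rfl | rfl⟩ := hx
  · exact mem_Bl t i
  · exact mem_Bl' ht _

def Touch {N n k : ℕ} (u : ZMod (n + 1) → HE N × HE N) (t : ZMod (k + 1) → HE N × HE N) : Prop :=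
  ∃ i, blk (u i).1 ∈ Bl t

lemma exists_cross {n : ℕ} (P : ZMod (n + 1) → Prop) (h1 : ∃ i, P i) (h2 : ∃ i, ¬ P i) :
    ∃ i, ¬ P i ∧ P (i + 1) := by
  by_contra! h
  obtain ⟨i, hi⟩ := h1
  obtain ⟨j, hj⟩ := h2
  have h3 : ∀ r : ℕ, ¬ P (j + r) := by
    intro r
    induction r with
    | zero => simpa using hj
    | succ r ih =>
      have := h _ ih
      rwa [add_assoc, ← Nat.cast_succ] at this
  apply h3 (i - j).val
  rw [ZMod.natCast_val, ZMod.cast_id]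
  simpa using hi

lemma prob_bound {N n k : ℕ} {u : ZMod (n + 1) → HE N × HE N} (hu : IsT n u)
    {t : ZMod (k + 1) → HE N × HE N} (ht : IsT k t) (J : Finset (ZMod (k + 1)))
    (hN : 2 * (k + 1 + (n + 1)) + 1 ≤ 2 * N) :
    N ^ (fr (Bl t) u) * ((OM (Ed t J)).filter (fun ω => Sub u ω)).card ≤ (OM (Ed t J)).card ∧
    (Touch u t → ¬ Inside u t →
      N ^ (fr (Bl t) u + 1) * ((OM (Ed t J)).filter (fun ω => Sub u ω)).card
        ≤ (OM (Ed t J)).card) := by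
  by_cases hemp : ((OM (Ed t J)).filter (fun ω => Sub u ω)) = ∅
  · rw [hemp]; simp
  obtain ⟨ω, hω⟩ := Finset.nonempty_iff_ne_empty.2 hemp
  rw [Finset.mem_filter] at hω
  obtain ⟨hω1, hω2⟩ := hω
  set I : Finset (ZMod (n + 1)) := Finset.univ.filter (fun i => (u i).1 ∉ V (Ed t J)) with hIdef
  have hI1 : ∀ i, i ∈ I ↔ (u i).1 ∉ V (Ed t J) := by simp [I]
  have hI2 : ∀ i, i ∈ I ↔ (u (i + 1)).2 ∉ V (Ed t J) := by
    intro i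
    rw [hI1, not_iff_not, ← hω2 i]
    exact ⟨V_closed hω1, V_closed' hω1⟩
  have hIc : I.card ≤ n + 1 := by
    have := Finset.card_le_univ I
    simpa [ZMod.card] using this
  have hJc : (Ed t J).card ≤ k + 1 := by
    have := Finset.card_le_univ J
    have h2 := Ed_card t J
    rw [ZMod.card] at this
    omega
  have hext := (ext_card hu (Ed t J) I (fun i hi => ⟨(hI1 i).1 hi, (hI2 i).1 hi⟩) N
    (by omega)).1
  have hsub : ((OM (Ed t J)).filter (fun ω => Sub u ω)).card ≤ (OM (Ed t J ∪ Ed u I)).card := by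
    apply Finset.card_le_card
    intro ω' h
    rw [Finset.mem_filter] at h
    rw [mem_OM]
    intro p hp
    rw [Finset.mem_union] at hp
    rcases hp with hp | hp
    · exact mem_OM.1 h.1 p hp
    · simp only [Ed, Finset.mem_image] at hp
      obtain ⟨i, _, rfl⟩ := hp
      exact h.2 i
  have hNpos : 0 < N := by omega
  have fin : ∀ r, r ≤ I.card →
      N ^ r * ((OM (Ed t J)).filter (fun ω => Sub u ω)).card ≤ (OM (Ed t J)).card := by
    intro r hr
    calc _ ≤ N ^ I.card * (OM (Ed t J ∪ Ed u I)).card :=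
          Nat.mul_le_mul (Nat.pow_le_pow_right hNpos hr) hsub
      _ ≤ _ := hext
  have hsubset : Finset.univ.filter (fun i => blk (u (i + 1)).2 ∉ Bl t) ⊆ I := by
    intro i hi
    rw [Finset.mem_filter] at hi
    rw [hI2]
    exact fun h => hi.2 (V_Bl ht h)
  refine ⟨fin _ ?_, fun htouch hins => fin _ ?_⟩
  · rw [fr_shift _ hu]
    exact Finset.card_le_card hsubset
  · rw [fr_shift _ hu]
    apply Nat.succ_le_of_lt
    apply Finset.card_lt_card
    rw [Finset.ssubset_iff_of_subset hsubset]
    have hstep : ∃ i ∈ I, blk (u (i + 1)).1 ∈ Bl t := by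
      by_cases hall : ∀ i, blk (u i).1 ∈ Bl t
      · have : ∃ i, i ∈ I := by
          by_contra! hno
          apply hins
          intro i
          have h1 : (u i).1 ∈ V (Ed t J) := by
            have := hno i; rw [hI1] at this; simpa using this
          have h2 := pair_of_mem_V hω1 h1
          rw [hω2 i] at h2
          simp only [Ed, Finset.mem_image, Prod.mk.injEq] at h2
          rcases h2 with ⟨j, _, h2⟩ | ⟨j, _, h2⟩
          · exact ⟨j, Or.inl ⟨h2.1.symm, h2.2.symm⟩⟩
          · exact ⟨j, Or.inr ⟨h2.2.symm, h2.1.symm⟩⟩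
        obtain ⟨i, hi⟩ := this
        exact ⟨i, hi, hall _⟩
      · push Not at hall
        obtain ⟨i, h1, h2⟩ := exists_cross (fun i => blk (u i).1 ∈ Bl t) htouch hall
        refine ⟨i, ?_, h2⟩
        rw [hI1]
        exact fun h => h1 (V_Bl ht h)
    obtain ⟨i, hi, hi2⟩ := hstep
    refine ⟨i, hi, ?_⟩
    rw [(hu.2 _).2] at hi2
    simp [hi2]

end CP

namespace CP
open scoped Classical

noncomputable def Fb {N : ℕ} (v : Fin N) : Finset (HE N) := Finset.univ.filter (fun a => blk a = v)

lemma Fb_card {N : ℕ} (v : Fin N) : (Fb v).card = 3 := by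
  have : (Fb v).card = (Finset.univ : Finset (Fin 3)).card := by
    symm
    refine Finset.card_bij' (fun r _ => (⟨3 * v.1 + r.1, by have := v.2; have := r.2; omega⟩ : HE N))
      (fun a _ => ⟨a.1 % 3, Nat.mod_lt _ (by norm_num)⟩) ?_ ?_ ?_ ?_
    · intro r _
      have := r.2
      refine Finset.mem_filter.2 ⟨Finset.mem_univ _, ?_⟩
      apply Fin.ext
      show (3 * v.1 + r.1) / 3 = v.1
      omega
    · intro a _; simp
    · intro r _
      have := r.2
      apply Fin.ext
      show (3 * v.1 + r.1) % 3 = r.1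
      omega
    · intro a ha
      have ha' : a.1 / 3 = v.1 := congrArg Fin.val (Finset.mem_filter.1 ha).2
      apply Fin.ext
      show 3 * v.1 + a.1 % 3 = a.1
      omega
  simpa using this

lemma sum_pairs {N : ℕ} (w : Fin N → ℝ) :
    ∑ p ∈ (Finset.univ : Finset (HE N × HE N)).filter (fun p => blk p.1 = blk p.2), w (blk p.1)
      = 9 * ∑ v, w v := by
  rw [← Finset.sum_fiberwise _ (fun p : HE N × HE N => blk p.1), Finset.mul_sum]
  refine Finset.sum_congr rfl fun v _ => ?_
  have h : (Finset.filter (fun p : HE N × HE N => blk p.1 = v)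
      (Finset.univ.filter (fun p => blk p.1 = blk p.2))) = Fb v ×ˢ Fb v := by
    ext p
    simp only [Fb, Finset.mem_filter, Finset.mem_univ, true_and, Finset.mem_product]
    constructor
    · rintro ⟨h1, h2⟩; exact ⟨h2, h1 ▸ h2⟩
    · rintro ⟨h1, h2⟩; exact ⟨h1.trans h2.symm, h1⟩
  rw [Finset.sum_congr rfl (g := fun _ => w v)]
  · rw [h, Finset.sum_const, Finset.card_product, Fb_card]; simp
  · intro p hp
    rw [(Finset.mem_filter.1 hp).2]

lemma sum_weights {N n : ℕ} (hN : 0 < N) (B : Finset (Fin N)) (k : ℕ) (hB : B.card ≤ k + 1) :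
    ∑ u ∈ (Finset.univ : Finset (ZMod (n + 1) → HE N × HE N)).filter (IsT n),
      ((1 : ℝ) / N) ^ (fr B u) ≤ (9 * (k + 2)) ^ (n + 1) := by
  set w : Fin N → ℝ := fun v => if v ∉ B then (1 : ℝ) / N else 1 with hw
  have hw0 : ∀ v, 0 ≤ w v := by intro v; simp only [hw]; split_ifs <;> positivity
  have h1 : ∀ u : ZMod (n + 1) → HE N × HE N, ((1 : ℝ) / N) ^ (fr B u) = ∏ i, w (blk (u i).1) := by
    intro u
    simp only [hw, fr]
    rw [Finset.prod_ite]
    simp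
  have h2 : ∑ u ∈ (Finset.univ : Finset (ZMod (n + 1) → HE N × HE N)).filter (IsT n),
      ((1 : ℝ) / N) ^ (fr B u) ≤ ∑ u ∈ Fintype.piFinset (fun _ : ZMod (n + 1) =>
        (Finset.univ : Finset (HE N × HE N)).filter (fun p => blk p.1 = blk p.2)),
        ∏ i, w (blk (u i).1) := by
    rw [Finset.sum_congr rfl (fun u _ => h1 u)]
    apply Finset.sum_le_sum_of_subset_of_nonneg
    · intro u hu
      rw [Finset.mem_filter] at hu
      rw [Fintype.mem_piFinset]
      intro i
      simpa using (hu.2.2 i).2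
    · intro u _ _
      exact Finset.prod_nonneg fun i _ => hw0 _
  refine h2.trans ?_
  rw [← Finset.prod_univ_sum (fun _ : ZMod (n + 1) =>
        (Finset.univ : Finset (HE N × HE N)).filter (fun p => blk p.1 = blk p.2))
        (fun _ p => w (blk p.1))]
  rw [Finset.prod_const, Finset.card_univ, ZMod.card, sum_pairs]
  apply pow_le_pow_left₀
  · have := Finset.sum_nonneg (fun v (_ : v ∈ Finset.univ) => hw0 v)
    positivity
  · have h3 : ∑ v, w v ≤ k + 2 := by
      simp only [hw]
      rw [Finset.sum_ite]
      simp only [Finset.sum_const, nsmul_eq_mul, mul_one]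
      have e1 : ((Finset.univ.filter (fun v => v ∉ B)).card : ℝ) ≤ N := by
        have := Finset.card_le_univ (Finset.univ.filter (fun v => v ∉ B))
        rw [Fintype.card_fin] at this
        exact_mod_cast this
      have e2 : ((Finset.univ.filter (fun v => ¬ v ∉ B)).card : ℝ) ≤ k + 1 := by
        have : (Finset.univ.filter (fun v => ¬ v ∉ B)) = B := by ext; simp
        rw [this]
        exact_mod_cast hB
      have e3 : ((Finset.univ.filter (fun v => v ∉ B)).card : ℝ) * (1 / N) ≤ 1 := by
        have : (0 : ℝ) < N := by exact_mod_cast hN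
        rw [mul_one_div, div_le_one this]; exact e1
      linarith
    linarith

lemma sum_swap {N n : ℕ} (O : Finset (Omega N)) (P : (ZMod (n + 1) → HE N × HE N) → Prop)
    [DecidablePred P] :
    ∑ ω ∈ O, ((Tset n ω).filter P).card =
      ∑ u ∈ (Finset.univ.filter (IsT n)).filter P, (O.filter (fun ω => Sub u ω)).card := by
  have := Finset.sum_card_bipartiteAbove_eq_sum_card_bipartiteBelow
    (s := O) (t := (Finset.univ.filter (IsT n)).filter P) (fun ω u => Sub u ω)
  refine Eq.trans (Finset.sum_congr rfl fun ω _ => ?_) this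
  congr 1
  ext u
  simp only [Tset, Finset.bipartiteAbove, Finset.mem_filter, Finset.mem_univ, true_and]
  tauto

lemma moment1 {N n k : ℕ} {t : ZMod (k + 1) → HE N × HE N} (ht : IsT k t)
    (J : Finset (ZMod (k + 1))) (hN : 2 * (k + 1 + (n + 1)) + 1 ≤ 2 * N) :
    ((∑ ω ∈ OM (Ed t J), (Tset n ω).card : ℕ) : ℝ) ≤
      (9 * (k + 2)) ^ (n + 1) * ((OM (Ed t J)).card : ℝ) := by
  have hN0 : (0 : ℝ) < N := by exact_mod_cast (by omega : 0 < N)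
  have h := sum_swap (n := n) (OM (Ed t J)) (fun _ => True)
  simp only [Finset.filter_true] at h
  rw [h]
  push_cast
  calc _ ≤ ∑ u ∈ (Finset.univ : Finset (ZMod (n + 1) → HE N × HE N)).filter (IsT n),
      ((1 : ℝ) / N) ^ (fr (Bl t) u) * ((OM (Ed t J)).card : ℝ) := by
        apply Finset.sum_le_sum
        intro u hu
        have h1 := (prob_bound (Finset.mem_filter.1 hu).2 ht J hN).1
        have h2 : ((N : ℝ) ^ (fr (Bl t) u) *
          ((OM (Ed t J)).filter (fun ω => Sub u ω)).card : ℝ) ≤ (OM (Ed t J)).card := by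
          exact_mod_cast h1
        rw [one_div, inv_pow, inv_mul_eq_div, le_div_iff₀ (by positivity)]
        linarith
    _ ≤ _ := by
        rw [← Finset.sum_mul]
        apply mul_le_mul_of_nonneg_right _ (by positivity)
        exact sum_weights (by omega) _ k (Bl_card t)

lemma moment2 {N n k : ℕ} {t : ZMod (k + 1) → HE N × HE N} (ht : IsT k t)
    (J : Finset (ZMod (k + 1))) (hN : 2 * (k + 1 + (n + 1)) + 1 ≤ 2 * N) :
    ((∑ ω ∈ OM (Ed t J), ((Tset n ω).filter (fun u => Touch u t ∧ ¬ Inside u t)).card : ℕ) : ℝ) ≤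
      (9 * (k + 2)) ^ (n + 1) / N * ((OM (Ed t J)).card : ℝ) := by
  have hN0 : (0 : ℝ) < N := by exact_mod_cast (by omega : 0 < N)
  rw [sum_swap]
  push_cast
  calc _ ≤ ∑ u ∈ ((Finset.univ : Finset (ZMod (n + 1) → HE N × HE N)).filter (IsT n)).filter
        (fun u => Touch u t ∧ ¬ Inside u t),
      ((1 : ℝ) / N) ^ (fr (Bl t) u) * (1 / N * ((OM (Ed t J)).card : ℝ)) := by
        apply Finset.sum_le_sum
        intro u hu
        simp only [Finset.mem_filter, Finset.mem_univ, true_and] at hu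
        have h1 := (prob_bound hu.1 ht J hN).2 hu.2.1 hu.2.2
        have h2 : ((N : ℝ) ^ (fr (Bl t) u + 1) *
          ((OM (Ed t J)).filter (fun ω => Sub u ω)).card : ℝ) ≤ (OM (Ed t J)).card := by
          exact_mod_cast h1
        rw [← mul_assoc, ← pow_succ, one_div, inv_pow, inv_mul_eq_div, le_div_iff₀ (by positivity)]
        linarith
    _ ≤ ∑ u ∈ ((Finset.univ : Finset (ZMod (n + 1) → HE N × HE N)).filter (IsT n)),
      ((1 : ℝ) / N) ^ (fr (Bl t) u) * (1 / N * ((OM (Ed t J)).card : ℝ)) := by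
        apply Finset.sum_le_sum_of_subset_of_nonneg (Finset.filter_subset _ _)
        intros; positivity
    _ ≤ (9 * (k + 2)) ^ (n + 1) * (1 / N * ((OM (Ed t J)).card : ℝ)) := by
        rw [← Finset.sum_mul]
        apply mul_le_mul_of_nonneg_right _ (by positivity)
        exact sum_weights (by omega) _ k (Bl_card t)
    _ = _ := by ring

lemma templates_card (N n : ℕ) :
    ((Finset.univ : Finset (ZMod (n + 1) → HE N × HE N)).filter (IsT n)).card =
      6 ^ (n + 1) * N.descFactorial (n + 1) := by
  rw [Finset.card_eq_sum_card_fiberwise (f := fun u i => blk (u i).1)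
    (t := (Finset.univ : Finset (ZMod (n + 1) → Fin N)).filter Function.Injective)]
  · have : ∀ c ∈ (Finset.univ : Finset (ZMod (n + 1) → Fin N)).filter Function.Injective,
      (Finset.filter (fun u : ZMod (n + 1) → HE N × HE N => (fun i => blk (u i).1) = c)
        (Finset.univ.filter (IsT n))).card = 6 ^ (n + 1) := by
      intro c hc
      have hc := (Finset.mem_filter.1 hc).2
      have h : (Finset.filter (fun u : ZMod (n + 1) → HE N × HE N => (fun i => blk (u i).1) = c)
        (Finset.univ.filter (IsT n))) = Fintype.piFinset (fun i => (Fb (c i)).offDiag) := by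
        ext u
        simp only [Finset.mem_filter, Finset.mem_univ, true_and, Fintype.mem_piFinset,
          Finset.mem_offDiag, Fb, IsT]
        constructor
        · rintro ⟨⟨h1, h2⟩, h3⟩ i
          have := congrFun h3 i
          exact ⟨this, (h2 i).2 ▸ this, (h2 i).1⟩
        · intro h
          have h3 : (fun i => blk (u i).1) = c := funext fun i => (h i).1
          refine ⟨⟨h3 ▸ hc, fun i => ⟨(h i).2.2, (h i).1.trans (h i).2.1.symm⟩⟩, h3⟩
      rw [h, Fintype.card_piFinset]
      simp [Finset.offDiag_card, Fb_card, ZMod.card]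
    rw [Finset.sum_congr rfl this, Finset.sum_const, smul_eq_mul, mul_comm]
    congr 1
    rw [← Fintype.card_subtype, Fintype.card_congr (Equiv.subtypeInjectiveEquivEmbedding _ _),
      Fintype.card_embedding_eq, ZMod.card, Fintype.card_fin]
  · intro u hu
    have hu := (Finset.mem_filter.1 hu).2
    simp [hu.1]

end CP

namespace CP
open scoped Classical

/-- traversals of `ω` that are not inside `t` -/
noncomputable def T' {N k : ℕ} (n : ℕ) (t : ZMod (k + 1) → HE N × HE N) (ω : Omega N) :
    Finset (ZMod (n + 1) → HE N × HE N) := (Tset n ω).filter (fun u => ¬ Inside u t)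

lemma mem_Tset {N n : ℕ} {ω : Omega N} {u} : u ∈ Tset n ω ↔ IsT n u ∧ Sub u ω := by
  simp [Tset]

lemma mem_T' {N n k : ℕ} {t : ZMod (k + 1) → HE N × HE N} {ω : Omega N} {u} :
    u ∈ T' n t ω ↔ (IsT n u ∧ Sub u ω) ∧ ¬ Inside u t := by
  simp [T', mem_Tset]

def Bad {N k : ℕ} (m : ℕ) (t : ZMod (k + 1) → HE N × HE N) (ω : Omega N) : Prop :=
  ∃ n < m, ∃ u ∈ Tset n ω, Touch u t ∧ ¬ Inside u t

def Hit {N : ℕ} (m : ℕ) (c : HE N) (ω : Omega N) : Prop :=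
  ∃ n < m, ∃ u ∈ Tset n ω, ∃ i, (u i).1 = c ∨ (u i).2 = c

lemma same_sets {N k m : ℕ} {t : ZMod (k + 1) → HE N × HE N} {a b c : HE N} {ω : Omega N}
    (ha : blk a ∈ Bl t) (hb : blk b ∈ Bl t) (hab : ω.1 a = b) (hca : c ≠ a)
    (h1 : ¬ Bad m t (cj c b ω)) (h2 : ¬ Bad m t ω) (h3 : ¬ Hit m c ω) (n : ℕ) (hn : n < m) :
    T' n t (cj c b ω) = T' n t ω := by
  have hne : a ≠ b := by rw [← hab]; exact (ω.2 a).2.symm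
  have avoid : ∀ ω' : Omega N, ¬ Bad m t ω' → ∀ u ∈ T' n t ω', ∀ i, ∀ x, blk x ∈ Bl t →
      (u i).1 ≠ x ∧ (u i).2 ≠ x := by
    intro ω' hbad u hu i x hx
    rw [mem_T'] at hu
    constructor
    · rintro rfl
      exact hbad ⟨n, hn, u, mem_Tset.2 hu.1, ⟨i, hx⟩, hu.2⟩
    · rintro rfl
      rw [← (hu.1.1.2 i).2] at hx
      exact hbad ⟨n, hn, u, mem_Tset.2 hu.1, ⟨i, hx⟩, hu.2⟩
  have hc : (cj c b ω).1 c = a := by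
    rw [cj_apply, Equiv.swap_apply_left, inv_eq ω hab,
      Equiv.swap_apply_of_ne_of_ne hca.symm hne]
  ext u
  constructor
  · intro hu
    have hu' := mem_T'.1 hu
    refine mem_T'.2 ⟨⟨hu'.1.1, fun i => ?_⟩, hu'.2⟩
    have hs := hu'.1.2 i
    have := cj_of_ne c b (cj c b ω) (x := (u i).1) ?_ (avoid _ h1 u hu i b hb).1 ?_
      (by rw [hs]; exact (avoid _ h1 u hu _ b hb).2)
    · rw [cj_cj] at this
      rw [this, hs]
    · intro h
      rw [h, hc] at hs
      exact (avoid _ h1 u hu _ a ha).2 hs.symm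
    · intro h
      have := inv_eq _ h
      rw [hc] at this
      exact (avoid _ h1 u hu i a ha).1 this.symm
  · intro hu
    have hu' := mem_T'.1 hu
    refine mem_T'.2 ⟨⟨hu'.1.1, fun i => ?_⟩, hu'.2⟩
    have hs := hu'.1.2 i
    have hit : ∀ i, (u i).1 ≠ c ∧ (u i).2 ≠ c := by
      intro i
      constructor
      · intro h; exact h3 ⟨n, hn, u, mem_Tset.2 hu'.1, i, Or.inl h⟩
      · intro h; exact h3 ⟨n, hn, u, mem_Tset.2 hu'.1, i, Or.inr h⟩
    rw [cj_of_ne c b ω (hit i).1 (avoid _ h2 u hu i b hb).1 (by rw [hs]; exact (hit _).2)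
      (by rw [hs]; exact (avoid _ h2 u hu _ b hb).2), hs]

noncomputable def Cst (k m : ℕ) : ℝ :=
  ∑ n ∈ Finset.range m, (2 * (n + 1) : ℝ) * (9 * (k + 2)) ^ (n + 1)

lemma Cst_nonneg (k m : ℕ) : 0 ≤ Cst k m := Finset.sum_nonneg fun n _ => by positivity

lemma bad_card {N k m : ℕ} {t : ZMod (k + 1) → HE N × HE N} (ht : IsT k t)
    (J : Finset (ZMod (k + 1))) (hN : 2 * (k + 1 + m) + 1 ≤ 2 * N) :
    (((OM (Ed t J)).filter (Bad m t)).card : ℝ) ≤ Cst k m / N * ((OM (Ed t J)).card : ℝ) := by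
  have h1 : ((OM (Ed t J)).filter (Bad m t)).card ≤ ∑ n ∈ Finset.range m, ∑ ω ∈ OM (Ed t J),
      ((Tset n ω).filter (fun u => Touch u t ∧ ¬ Inside u t)).card := by
    rw [Finset.sum_comm, Finset.card_filter]
    refine Finset.sum_le_sum fun ω _ => ?_
    split_ifs with hb
    · obtain ⟨n, hn, u, hu, h2⟩ := hb
      refine le_trans ?_ (Finset.single_le_sum (f := fun n =>
        ((Tset n ω).filter (fun u => Touch u t ∧ ¬ Inside u t)).card) (fun _ _ => Nat.zero_le _)
        (Finset.mem_range.2 hn))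
      exact Finset.card_pos.2 ⟨u, Finset.mem_filter.2 ⟨hu, h2⟩⟩
    · exact Nat.zero_le _
  have h2 : (((OM (Ed t J)).filter (Bad m t)).card : ℝ) ≤ ∑ n ∈ Finset.range m,
      ((∑ ω ∈ OM (Ed t J), ((Tset n ω).filter
        (fun u => Touch u t ∧ ¬ Inside u t)).card : ℕ) : ℝ) := by
    exact_mod_cast h1
  refine h2.trans ?_
  unfold Cst
  rw [Finset.sum_div, Finset.sum_mul]
  refine Finset.sum_le_sum fun n hn => ?_
  refine (moment2 ht J (by have := Finset.mem_range.1 hn; omega)).trans ?_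
  gcongr
  have : (0 : ℝ) ≤ (9 * (k + 2)) ^ (n + 1) := by positivity
  have h0 : (0 : ℝ) ≤ n := by positivity
  nlinarith

lemma hit_card {N k m : ℕ} {t : ZMod (k + 1) → HE N × HE N} (ht : IsT k t)
    (J : Finset (ZMod (k + 1))) (hN : 2 * (k + 1 + m) + 1 ≤ 2 * N) (S : Finset (HE N)) :
    (((S ×ˢ OM (Ed t J)).filter (fun p => Hit m p.1 p.2)).card : ℝ) ≤
      Cst k m * ((OM (Ed t J)).card : ℝ) := by
  have h1 : ((S ×ˢ OM (Ed t J)).filter (fun p => Hit m p.1 p.2)).card ≤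
      ∑ ω ∈ OM (Ed t J), ∑ n ∈ Finset.range m, 2 * (n + 1) * (Tset n ω).card := by
    rw [Finset.card_filter, Finset.sum_product_right]
    refine Finset.sum_le_sum fun ω _ => ?_
    rw [← Finset.card_filter]
    have : S.filter (fun c => Hit m c ω) ⊆ (Finset.range m).biUnion (fun n =>
        (Tset n ω).biUnion (fun u => Finset.univ.image (fun i => (u i).1) ∪
          Finset.univ.image (fun i => (u i).2))) := by
      intro c hc
      obtain ⟨n, hn, u, hu, i, hi⟩ := (Finset.mem_filter.1 hc).2
      simp only [Finset.mem_biUnion, Finset.mem_union, Finset.mem_image, Finset.mem_univ, true_and]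
      refine ⟨n, Finset.mem_range.2 hn, u, hu, ?_⟩
      rcases hi with hi | hi
      · exact Or.inl ⟨i, hi⟩
      · exact Or.inr ⟨i, hi⟩
    refine (Finset.card_le_card this).trans (Finset.card_biUnion_le.trans ?_)
    refine Finset.sum_le_sum fun n _ => ?_
    refine le_trans (Finset.card_biUnion_le_card_mul _ _ (2 * (n + 1)) fun u _ => ?_)
      (le_of_eq (mul_comm _ _))
    refine (Finset.card_union_le _ _).trans ?_
    have e1 : (Finset.univ.image (fun i => (u i).1)).card ≤ n + 1 := by
      simpa [ZMod.card] using Finset.card_image_le (s := Finset.univ) (f := fun i => (u i).1)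
    have e2 : (Finset.univ.image (fun i => (u i).2)).card ≤ n + 1 := by
      simpa [ZMod.card] using Finset.card_image_le (s := Finset.univ) (f := fun i => (u i).2)
    omega
  rw [Finset.sum_comm] at h1
  simp only [← Finset.mul_sum] at h1
  have h2 : (((S ×ˢ OM (Ed t J)).filter (fun p => Hit m p.1 p.2)).card : ℝ) ≤
      ∑ n ∈ Finset.range m, (2 * (n + 1) : ℝ) *
        ((∑ ω ∈ OM (Ed t J), (Tset n ω).card : ℕ) : ℝ) := by exact_mod_cast h1
  refine h2.trans ?_
  unfold Cst
  rw [Finset.sum_mul]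
  refine Finset.sum_le_sum fun n hn => ?_
  have hm1 := moment1 (n := n) ht J (by have := Finset.mem_range.1 hn; omega)
  have h0 : (0 : ℝ) ≤ 2 * (n + 1) := by positivity
  exact (mul_le_mul_of_nonneg_left hm1 h0).trans (le_of_eq (by ring))

lemma card_diff {α : Type*} (S : Finset α) (P Q R1 R2 R3 : α → Prop)
    (h : ∀ x ∈ S, ¬ R1 x → ¬ R2 x → ¬ R3 x → (P x ↔ Q x)) :
    |((S.filter P).card : ℝ) - ((S.filter Q).card : ℝ)| ≤
      (S.filter R1).card + (S.filter R2).card + (S.filter R3).card := by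
  have gen : ∀ P Q : α → Prop, (∀ x ∈ S, ¬ R1 x → ¬ R2 x → ¬ R3 x → (P x → Q x)) →
      (S.filter P).card ≤ (S.filter Q).card +
        ((S.filter R1).card + (S.filter R2).card + (S.filter R3).card) := by
    intro P Q h
    have : S.filter P ⊆ S.filter Q ∪ (S.filter R1 ∪ S.filter R2 ∪ S.filter R3) := by
      intro x hx
      rw [Finset.mem_filter] at hx
      have := h x hx.1
      simp only [Finset.mem_union, Finset.mem_filter]
      tauto
    refine (Finset.card_le_card this).trans ?_
    refine (Finset.card_union_le _ _).trans ?_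
    have h1 := Finset.card_union_le (S.filter R1 ∪ S.filter R2) (S.filter R3)
    have h2 := Finset.card_union_le (S.filter R1) (S.filter R2)
    omega
  have h1 := gen P Q (fun x hx a b c => (h x hx a b c).1)
  have h2 := gen Q P (fun x hx a b c => (h x hx a b c).2)
  have h1' : ((S.filter P).card : ℝ) ≤ (S.filter Q).card +
        ((S.filter R1).card + (S.filter R2).card + (S.filter R3).card) := by exact_mod_cast h1
  have h2' : ((S.filter Q).card : ℝ) ≤ (S.filter P).card +
        ((S.filter R1).card + (S.filter R2).card + (S.filter R3).card) := by exact_mod_cast h2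
  rw [abs_le]
  constructor <;> linarith

lemma step_prob {N k m : ℕ} {t : ZMod (k + 1) → HE N × HE N} (ht : IsT k t)
    (J : Finset (ZMod (k + 1))) (i : ZMod (k + 1)) (hi : i ∉ J)
    (hN : 2 * (k + 1 + m) + 1 ≤ 2 * N) (hpos : 0 < (OM (Ed t J)).card) (Q : Omega N → Prop)
    (hQ : ∀ ω ω', (∀ n < m, T' n t ω = T' n t ω') → (Q ω ↔ Q ω')) :
    |(((OM (Ed t J)).filter Q).card : ℝ) / (OM (Ed t J)).card -
      (((OM (Ed t (insert i J))).filter Q).card : ℝ) / (OM (Ed t (insert i J))).card| ≤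
      3 * Cst k m / N := by
  set a := (t i).1 with ha
  set b := (t (i + 1)).2 with hb
  have hf := fresh ht hi
  have hne := ht.fst_ne_snd i (i + 1)
  have hEd : Ed t (insert i J) = insert (a, b) (Ed t J) := Ed_insert t J i
  have hcard := step_card (Ed t J) a b hf.1 hf.2 hne
  have hA := step_bij (Ed t J) a b hf.1 hf.2 hne Q
  have hB := step_bij (Ed t J) a b hf.1 hf.2 hne (Bad m t)
  rw [← hEd] at hcard hA hB
  set O' := OM (Ed t (insert i J)) with hO'
  set S := Cs (Ed t J) a with hS
  have hdiff := card_diff (S ×ˢ O') (fun p => Q (cj p.1 b p.2)) (fun p => Q p.2)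
    (fun p => Bad m t (cj p.1 b p.2)) (fun p => Bad m t p.2) (fun p => Hit m p.1 p.2) (by
      rintro ⟨c, ω⟩ hp h1 h2 h3
      rw [Finset.mem_product] at hp
      apply hQ
      intro n hn
      refine same_sets (a := a) (mem_Bl t i) (mem_Bl' ht _) ?_ (mem_Cs.1 hp.1).1 h1 h2 h3 n hn
      have := mem_OM.1 hp.2 (a, b) (by rw [hEd]; exact Finset.mem_insert_self _ _)
      exact this)
  have prodcard : ∀ R : Omega N → Prop, ((S ×ˢ O').filter (fun p => R p.2)).card =
      S.card * (O'.filter R).card := by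
    intro R
    rw [← Finset.card_product]
    congr 1
    ext p
    simp only [Finset.mem_filter, Finset.mem_product]
    tauto
  rw [← hA, ← hB, prodcard, prodcard] at hdiff
  have b1 := bad_card (m := m) ht J hN
  have b2 := bad_card (m := m) ht (insert i J) hN
  have b3 := hit_card (m := m) ht (insert i J) hN S
  rw [← hO'] at b2 b3
  have hSN : N ≤ S.card := by
    have h1 := Cs_card_ge (Ed t J) a
    have h2 := Ed_card t J
    have h3 := Finset.card_le_univ J
    rw [ZMod.card] at h3
    rw [← hS] at h1
    omega
  have hN0 : (0 : ℝ) < N := by exact_mod_cast (by omega : 0 < N)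
  have hSN' : (N : ℝ) ≤ S.card := by exact_mod_cast hSN
  have hS0 : (0 : ℝ) < S.card := by linarith
  have hO0 : (0 : ℝ) < O'.card := by
    have : 0 < O'.card := by
      rcases Nat.eq_zero_or_pos O'.card with h | h
      · rw [hcard, h] at hpos; simp at hpos
      · exact h
    exact_mod_cast this
  have hcard' : ((OM (Ed t J)).card : ℝ) = S.card * O'.card := by exact_mod_cast hcard
  rw [hcard'] at b1 ⊢
  have hC := Cst_nonneg k m
  push_cast at hdiff
  have b3' : Cst k m * (O'.card : ℝ) ≤ Cst k m / N * (S.card * O'.card) := by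
    rw [div_mul_eq_mul_div, le_div_iff₀ hN0]
    have : Cst k m * (O'.card : ℝ) * N ≤ Cst k m * (O'.card : ℝ) * S.card :=
      mul_le_mul_of_nonneg_left hSN' (by positivity)
    linarith
  have b2' := mul_le_mul_of_nonneg_left b2 hS0.le
  have e : (((OM (Ed t J)).filter Q).card : ℝ) / (S.card * O'.card) -
      ((O'.filter Q).card : ℝ) / O'.card = ((((OM (Ed t J)).filter Q).card : ℝ) -
      S.card * (O'.filter Q).card) / (S.card * O'.card) := by
    field_simp
  rw [e, abs_div, abs_of_pos (mul_pos hS0 hO0), div_le_iff₀ (mul_pos hS0 hO0)]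
  refine hdiff.trans ?_
  have e2 : 3 * Cst k m / N * (S.card * O'.card) =
    3 * (Cst k m / N * (S.card * O'.card)) := by ring
  have e3 : (S.card : ℝ) * (Cst k m / N * O'.card) = Cst k m / N * (S.card * O'.card) := by ring
  rw [e2]
  linarith

lemma OM_empty {N : ℕ} : OM (∅ : Finset (HE N × HE N)) = Finset.univ := by simp [OM]

lemma OM_pos {N k : ℕ} {t : ZMod (k + 1) → HE N × HE N} (ht : IsT k t)
    (J : Finset (ZMod (k + 1))) (hN : 2 * (k + 1) + 1 ≤ 2 * N)
    (hpos : 0 < Fintype.card (Omega N)) : 0 < (OM (Ed t J)).card := by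
  have h3 := Finset.card_le_univ J
  rw [ZMod.card] at h3
  have h := (ext_card ht ∅ J (by simp [V]) N (by simp; omega)).2
  rw [OM_empty, Finset.empty_union, Finset.card_univ] at h
  by_contra h0
  have : (OM (Ed t J)).card = 0 := by omega
  rw [this] at h
  omega

lemma chain_prob {N k m : ℕ} {t : ZMod (k + 1) → HE N × HE N} (ht : IsT k t)
    (hN : 2 * (k + 1 + m) + 1 ≤ 2 * N) (hpos : 0 < Fintype.card (Omega N)) (Q : Omega N → Prop)
    (hQ : ∀ ω ω', (∀ n < m, T' n t ω = T' n t ω') → (Q ω ↔ Q ω')) (J : Finset (ZMod (k + 1))) :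
    |((Finset.univ.filter Q).card : ℝ) / Fintype.card (Omega N) -
      (((OM (Ed t J)).filter Q).card : ℝ) / (OM (Ed t J)).card| ≤
      J.card * (3 * Cst k m / N) := by
  induction J using Finset.induction_on with
  | empty => simp [Ed, OM_empty]
  | insert i J hi ih =>
    have := step_prob ht J i hi hN (OM_pos ht J (by omega) hpos) Q hQ
    rw [Finset.card_insert_of_notMem hi]
    push_cast
    calc _ ≤ _ := abs_sub_le _ _ _
      _ ≤ _ := add_le_add ih this
      _ = _ := by ring

end CP

namespace CP
open scoped Classical

def act {N n : ℕ} : DihedralGroup (n + 1) → (ZMod (n + 1) → HE N × HE N) →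
    (ZMod (n + 1) → HE N × HE N)
  | .r j, u => fun i => u (i + j)
  | .sr j, u => fun i => (u (j - i)).swap

lemma act_one {N n : ℕ} (u : ZMod (n + 1) → HE N × HE N) : act 1 u = u := by
  rw [DihedralGroup.one_def]; funext i; simp [act]

lemma act_mul {N n : ℕ} (g h : DihedralGroup (n + 1)) (u : ZMod (n + 1) → HE N × HE N) :
    act (g * h) u = act g (act h u) := by
  rcases g with i | i <;> rcases h with j | j <;> funext x <;> simp [act] <;> ring_nf

lemma act_IsT {N n : ℕ} (g : DihedralGroup (n + 1)) {u : ZMod (n + 1) → HE N × HE N}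
    (hu : IsT n u) : IsT n (act g u) := by
  rcases g with j | j
  · refine ⟨fun x y h => ?_, fun i => hu.2 _⟩
    have := hu.1 h
    simpa using this
  · refine ⟨fun x y h => ?_, fun i => ⟨(hu.2 _).1.symm, (hu.2 _).2.symm⟩⟩
    simp only [act, Prod.fst_swap, ← (hu.2 _).2] at h
    have := hu.1 h
    simpa using this

lemma act_Sub {N n : ℕ} (g : DihedralGroup (n + 1)) {u : ZMod (n + 1) → HE N × HE N} {ω : Omega N}
    (hu : Sub u ω) : Sub (act g u) ω := by
  intro i
  rcases g with j | j
  · have := hu (i + j)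
    simp only [act]
    rw [this]; congr 2; ring
  · have := inv_eq ω (hu (j - (i + 1)))
    simp only [act, Prod.fst_swap, Prod.snd_swap]
    rw [← this]; congr 3; ring

lemma act_free {N n : ℕ} (g : DihedralGroup (n + 1)) {u : ZMod (n + 1) → HE N × HE N}
    (hu : IsT n u) (h : act g u = u) : g = 1 := by
  rcases g with j | j
  · have h0 := congrFun h 0
    simp only [act, zero_add] at h0
    have : j = 0 := hu.fst_inj (congrArg Prod.fst h0)
    rw [this]; rfl
  · have h0 := congrFun h 0
    simp only [act] at h0
    exact absurd (congrArg Prod.fst h0).symm (hu.fst_ne_snd _ _)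

lemma act_inj {N n : ℕ} {u : ZMod (n + 1) → HE N × HE N} (hu : IsT n u) :
    Function.Injective (fun g : DihedralGroup (n + 1) => act g u) := by
  intro g h hgh
  have hgh : act g u = act h u := hgh
  have : act (h⁻¹ * g) u = u := by
    rw [act_mul, hgh, ← act_mul, inv_mul_cancel, act_one]
  have := act_free _ hu this
  exact (inv_mul_eq_one.1 this).symm

lemma act_Inside {N n : ℕ} (g : DihedralGroup (n + 1)) (u : ZMod (n + 1) → HE N × HE N) :
    Inside (act g u) u := by
  intro i
  rcases g with j | j
  · refine ⟨i + j, Or.inl ⟨rfl, ?_⟩⟩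
    simp only [act]; congr 2; ring
  · refine ⟨j - (i + 1), Or.inr ⟨?_, rfl⟩⟩
    simp only [act, Prod.fst_swap]; congr 2; ring

lemma Inside_core {N n k : ℕ} {u : ZMod (n + 1) → HE N × HE N} {t : ZMod (k + 1) → HE N × HE N}
    (hu : IsT n u) (ht : IsT k t) (h : Inside u t) (j : ZMod (k + 1))
    (h1 : (u 0).1 = (t j).1) (h2 : (u (0 + 1)).2 = (t (j + 1)).2) :
    n = k ∧ ∀ r : ℕ, u ((r + 1 : ℕ) : ZMod (n + 1)) = t (j + ((r + 1 : ℕ) : ZMod (k + 1))) := by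
  have key : ∀ r : ℕ, (u (r : ZMod (n + 1))).1 = (t (j + (r : ZMod (k + 1)))).1 ∧
      (u ((r : ZMod (n + 1)) + 1)).2 = (t (j + (r : ZMod (k + 1)) + 1)).2 := by
    intro r
    induction r with
    | zero => 
      rw [zero_add] at h2
      simpa using And.intro h1 h2
    | succ r ih =>
      push_cast
      rw [← add_assoc]
      obtain ⟨j', hj⟩ := h ((r : ZMod (n + 1)) + 1)
      have hb : blk (u ((r : ZMod (n + 1)) + 1)).1 = blk (t (j + (r : ZMod (k + 1)) + 1)).1 := by
        rw [(hu.2 _).2, (ht.2 _).2, ih.2]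
      rcases hj with hj | hj
      · rw [hj.1] at hb
        have := ht.1 hb
        subst this
        exact hj
      · rw [hj.1, ← (ht.2 _).2] at hb
        have := ht.1 hb
        rw [this, ← ih.2] at hj
        exact absurd hj.1 (hu.2 _).1
  have d1 : (k + 1) ∣ (n + 1) := by
    have := (key (n + 1)).1
    rw [ZMod.natCast_self, h1] at this
    have := ht.fst_inj this
    rw [left_eq_add] at this
    exact (ZMod.natCast_eq_zero_iff _ _).1 this
  have d2 : (n + 1) ∣ (k + 1) := by
    have := (key (k + 1)).1
    rw [ZMod.natCast_self, add_zero, ← h1] at this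
    have := hu.fst_inj this
    exact (ZMod.natCast_eq_zero_iff _ _).1 this
  refine ⟨by have := Nat.dvd_antisymm d1 d2; omega, fun r => ?_⟩
  apply Prod.ext
  · exact (key (r + 1)).1
  · have := (key r).2
    push_cast
    rw [this, add_assoc]

lemma Inside_core' {N n k : ℕ} {u : ZMod (n + 1) → HE N × HE N} {t : ZMod (k + 1) → HE N × HE N}
    (hu : IsT n u) (ht : IsT k t) (h : Inside u t) :
    ∃ t', IsT k t' ∧ (∃ g, t' = act g t) ∧ n = k ∧
      ∃ j, ∀ r : ℕ, u ((r + 1 : ℕ) : ZMod (n + 1)) = t' (j + ((r + 1 : ℕ) : ZMod (k + 1))) := by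
  obtain ⟨j, hj | hj⟩ := h 0
  · have := Inside_core hu ht h j hj.1 hj.2
    exact ⟨t, ht, ⟨1, (act_one t).symm⟩, this.1, j, this.2⟩
  · have ht' := act_IsT (DihedralGroup.sr 0) ht
    have hin : Inside u (act (DihedralGroup.sr 0) t) := by
      intro i
      obtain ⟨j, hj | hj⟩ := h i
      · refine ⟨-(j + 1), Or.inr ⟨?_, ?_⟩⟩
        · simp only [act, Prod.snd_swap]; rw [hj.1]; congr 2; ring
        · simp only [act, Prod.fst_swap]; rw [hj.2]; congr 2; ring
      · refine ⟨-(j + 1), Or.inl ⟨?_, ?_⟩⟩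
        · simp only [act, Prod.fst_swap]; rw [hj.1]; congr 2; ring
        · simp only [act, Prod.snd_swap]; rw [hj.2]; congr 2; ring
    have := Inside_core hu ht' hin (-(j + 1))
      (by simp only [act, Prod.fst_swap]; rw [hj.1]; congr 2; ring)
      (by simp only [act, Prod.snd_swap]; rw [hj.2]; congr 2; ring)
    exact ⟨_, ht', ⟨_, rfl⟩, this.1, _, this.2⟩

lemma Inside_ne {N n k : ℕ} {u : ZMod (n + 1) → HE N × HE N} {t : ZMod (k + 1) → HE N × HE N}
    (hu : IsT n u) (ht : IsT k t) (h : Inside u t) : n = k :=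
  (Inside_core' hu ht h).choose_spec.2.2.1

lemma Inside_act {N k : ℕ} {u t : ZMod (k + 1) → HE N × HE N}
    (hu : IsT k u) (ht : IsT k t) (h : Inside u t) : ∃ g, u = act g t := by
  obtain ⟨t', _, ⟨g, hg⟩, _, j, hj⟩ := Inside_core' hu ht h
  refine ⟨DihedralGroup.r j * g, ?_⟩
  rw [act_mul, ← hg]
  funext i
  have := hj (i - 1).val
  push_cast at this
  rw [ZMod.natCast_val, ZMod.cast_id] at this
  simp only [sub_add_cancel] at this
  rw [this, act, add_comm]

lemma Tset_card_of_Sub {N n k : ℕ} {t : ZMod (k + 1) → HE N × HE N} (ht : IsT k t) {ω : Omega N}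
    (hs : Sub t ω) : (Tset n ω).card = (T' n t ω).card + if n = k then 2 * (k + 1) else 0 := by
  have h := Finset.card_filter_add_card_filter_not (s := Tset n ω) (fun u => ¬ Inside u t)
  rw [← h]
  unfold T'
  congr 1
  split_ifs with hnk
  · subst hnk
    have : (Tset n ω).filter (fun u => ¬ ¬ Inside u t) = Finset.univ.image (fun g => act g t) := by
      ext u
      simp only [Finset.mem_filter, mem_Tset, not_not, Finset.mem_image, Finset.mem_univ, true_and]
      constructor
      · rintro ⟨⟨h1, _⟩, h3⟩
        obtain ⟨g, hg⟩ := Inside_act h1 ht h3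
        exact ⟨g, hg.symm⟩
      · rintro ⟨g, rfl⟩
        exact ⟨⟨act_IsT g ht, act_Sub g hs⟩, act_Inside g t⟩
    rw [this, Finset.card_image_of_injective _ (act_inj ht), Finset.card_univ, DihedralGroup.card]
  · rw [Finset.card_eq_zero, Finset.filter_eq_empty_iff]
    intro u hu
    rw [not_not]
    exact fun h => hnk (Inside_ne (mem_Tset.1 hu).1 ht h)

lemma T'_of_not_Sub {N n k : ℕ} {t : ZMod (k + 1) → HE N × HE N} (ht : IsT k t) {ω : Omega N}
    (hs : ¬ Sub t ω) : T' n t ω = Tset n ω := by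
  unfold T'
  rw [Finset.filter_eq_self]
  intro u hu hin
  rw [mem_Tset] at hu
  have := Inside_ne hu.1 ht hin
  subst this
  obtain ⟨g, rfl⟩ := Inside_act hu.1 ht hin
  apply hs
  have := act_Sub g⁻¹ hu.2
  rwa [← act_mul, inv_mul_cancel, act_one] at this

lemma dvd_Tset {N : ℕ} (n : ℕ) (ω : Omega N) : 2 * (n + 1) ∣ (Tset n ω).card := by
  let _ : MulAction (DihedralGroup (n + 1)) {u // u ∈ Tset n ω} :=
    { smul := fun g u => ⟨act g u.1, by
        have := mem_Tset.1 u.2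
        exact mem_Tset.2 ⟨act_IsT g this.1, act_Sub g this.2⟩⟩
      one_smul := fun u => Subtype.ext (act_one _)
      mul_smul := fun g h u => Subtype.ext (act_mul _ _ _) }
  have e := MulAction.selfEquivOrbitsQuotientProd (G := DihedralGroup (n + 1))
    (X := {u // u ∈ Tset n ω}) (by
      intro u
      rw [eq_bot_iff]
      intro g hg
      have hg : g • u = u := hg
      have : act g u.1 = u.1 := congrArg Subtype.val hg
      exact Subgroup.mem_bot.2 (act_free g (mem_Tset.1 u.2).1 this))
  have h := Nat.card_congr e
  rw [Nat.card_prod, Nat.card_eq_fintype_card, Fintype.card_coe, DihedralGroup.nat_card] at h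
  rw [h]
  exact dvd_mul_left _ _

end CP

namespace CP
open scoped Classical

lemma card_T0 {N : ℕ} (ω : Omega N) :
    (Tset 0 ω).card = Nat.card {a : Fin (3 * N) // blk (ω.val a) = blk a} := by
  rw [Nat.card_eq_fintype_card, Fintype.card_subtype]
  have hz : ∀ i : ZMod (0 + 1), i = 0 := fun i => Subsingleton.elim (α := Fin 1) i 0
  refine Finset.card_bij' (fun u _ => (u 0).1) (fun a _ => fun _ => (a, ω.1 a)) ?_ ?_ ?_ ?_
  · intro u hu
    obtain ⟨h1, h2⟩ := mem_Tset.1 hu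
    have h3 := h2 0
    rw [hz (0 + 1)] at h3
    simp only [Finset.mem_filter, Finset.mem_univ, true_and]
    rw [h3]; exact (h1.2 0).2.symm
  · intro a ha
    have ha := (Finset.mem_filter.1 ha).2
    refine mem_Tset.2 ⟨⟨fun i j _ => by rw [hz i, hz j], fun i => ⟨(ω.2 a).2.symm, ha.symm⟩⟩,
      fun i => rfl⟩
  · intro u hu
    obtain ⟨h1, h2⟩ := mem_Tset.1 hu
    have h3 := h2 0
    rw [hz (0 + 1)] at h3
    funext i
    rw [hz i]
    exact Prod.ext rfl h3
  · intro a _; rfl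

lemma card_Tcyc {N : ℕ} (n : ℕ) (hn : 2 ≤ n) (ω : Omega N) :
    (Tset n ω).card = Nat.card {p : (ZMod (n + 1) → Fin N) × (ZMod (n + 1) → Fin (3 * N)) //
    Function.Injective p.1 ∧
      ∀ i, blk (p.2 i) = p.1 i ∧ blk (ω.val (p.2 i)) = p.1 (i + 1)} := by
  rw [Nat.card_eq_fintype_card, Fintype.card_subtype]
  refine Finset.card_bij' (fun u _ => (fun i => blk (u i).1, fun i => (u i).1))
    (fun p _ => fun i => (p.2 i, ω.1 (p.2 (i - 1)))) ?_ ?_ ?_ ?_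
  · intro u hu
    obtain ⟨h1, h2⟩ := mem_Tset.1 hu
    refine Finset.mem_filter.2 ⟨Finset.mem_univ _, h1.1, fun i => ⟨rfl, ?_⟩⟩
    simp only
    rw [h2 i]; exact (h1.2 _).2.symm
  · rintro ⟨c, h⟩ hp
    obtain ⟨h1, h2⟩ := (Finset.mem_filter.1 hp).2
    simp only at h1 h2
    refine mem_Tset.2 ⟨⟨?_, fun i => ⟨?_, ?_⟩⟩, fun i => ?_⟩
    · intro i j hij
      simp only [(h2 _).1] at hij
      exact h1 hij
    · intro he
      simp only at he
      have e := inv_eq ω he.symm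
      have e1 := (h2 i).2
      rw [e, (h2 _).1] at e1
      have e2 := h1 e1
      have e3 : ((2 : ℕ) : ZMod (n + 1)) = 0 := by
        push_cast
        linear_combination -e2
      have := Nat.le_of_dvd (by norm_num) ((ZMod.natCast_eq_zero_iff _ _).1 e3)
      omega
    · simp only
      rw [(h2 _).1, (h2 _).2, sub_add_cancel]
    · simp
  · intro u hu
    obtain ⟨h1, h2⟩ := mem_Tset.1 hu
    funext i
    refine Prod.ext rfl ?_
    simp only
    rw [h2, sub_add_cancel]
  · rintro ⟨c, h⟩ hp
    obtain ⟨h1, h2⟩ := (Finset.mem_filter.1 hp).2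
    simp only at h1 h2
    simp only [Prod.mk.injEq, and_true]
    funext i
    exact (h2 i).1

noncomputable def Ee {N : ℕ} (ω : Omega N) (v w : Fin N) : Finset (HE N) :=
  Finset.univ.filter (fun a => blk a = v ∧ blk (ω.1 a) = w)

lemma mult_eq {N : ℕ} (ω : Omega N) {v w : Fin N} (h : v ≠ w) :
    mult ω v w = (Ee ω v w).card := by
  unfold mult Ee
  rw [if_neg h, Nat.card_eq_fintype_card, Fintype.card_subtype]

lemma Ee_symm {N : ℕ} (ω : Omega N) (v w : Fin N) : (Ee ω v w).card = (Ee ω w v).card := by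
  refine Finset.card_bij' (fun a _ => ω.1 a) (fun a _ => ω.1 a) ?_ ?_ ?_ ?_
  · intro a ha; simpa [Ee, (ω.2 a).1, and_comm] using ha
  · intro a ha; simpa [Ee, (ω.2 a).1, and_comm] using ha
  · intro a _; exact (ω.2 a).1
  · intro a _; exact (ω.2 a).1

lemma z2 (i : ZMod (1 + 1)) : i = 0 ∨ i = 1 := by
  revert i; decide

lemma card_T1_aux {N : ℕ} (ω : Omega N) :
    (Tset 1 ω).card = ((Finset.univ : Finset (HE N × HE N)).filter (fun p =>
      p.1 ≠ p.2 ∧ blk p.1 = blk p.2 ∧ blk (ω.1 p.1) = blk (ω.1 p.2) ∧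
        blk p.1 ≠ blk (ω.1 p.1))).card := by
  have h11 : (1 + 1 : ZMod (1 + 1)) = 0 := by decide
  refine Finset.card_bij' (fun u _ => u 0)
    (fun p _ => fun i => if i = 0 then p else (ω.1 p.2, ω.1 p.1)) ?_ ?_ ?_ ?_
  · intro u hu
    obtain ⟨h1, h2⟩ := mem_Tset.1 hu
    have e0 := h2 0
    have e1 := inv_eq ω (h2 1)
    rw [h11] at e1
    rw [zero_add] at e0
    refine Finset.mem_filter.2 ⟨Finset.mem_univ _, (h1.2 0).1, (h1.2 0).2, ?_, ?_⟩
    · rw [e0, e1]; exact (h1.2 1).2.symm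
    · rw [e0, ← (h1.2 1).2]
      intro h
      have := h1.1 h
      revert this; decide
  · intro p hp
    obtain ⟨h1, h2, h3, h4⟩ := (Finset.mem_filter.1 hp).2
    refine mem_Tset.2 ⟨⟨?_, ?_⟩, ?_⟩
    · intro i j
      rcases z2 i with rfl | rfl <;> rcases z2 j with rfl | rfl <;> simp [← h3, h4, h4.symm]
    · intro i
      rcases z2 i with rfl | rfl
      · simp [h1, h2]
      · simp [h3, h1.symm]
    · intro i
      rcases z2 i with rfl | rfl
      · simp
      · simp [h11, (ω.2 _).1]
  · intro u hu
    obtain ⟨h1, h2⟩ := mem_Tset.1 hu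
    have e0 := h2 0
    have e1 := inv_eq ω (h2 1)
    rw [h11] at e1
    rw [zero_add] at e0
    funext i
    rcases z2 i with rfl | rfl
    · simp
    · simp [e0, e1]
  · intro p _; simp

lemma card_T1 {N : ℕ} (ω : Omega N) : (Tset 1 ω).card = 4 * X2 ω := by
  rw [card_T1_aux, Finset.card_eq_sum_card_fiberwise
    (f := fun p => (blk p.1, blk (ω.1 p.1))) (t := Finset.univ) (fun _ _ => Finset.mem_coe.2 (Finset.mem_univ _))]
  rw [Fintype.sum_prod_type]
  have h1 : ∀ v w : Fin N, (Finset.filter (fun p : HE N × HE N => (blk p.1, blk (ω.1 p.1)) = (v, w))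
      ((Finset.univ : Finset (HE N × HE N)).filter (fun p =>
      p.1 ≠ p.2 ∧ blk p.1 = blk p.2 ∧ blk (ω.1 p.1) = blk (ω.1 p.2) ∧
        blk p.1 ≠ blk (ω.1 p.1)))).card =
      (if v < w then 2 * (Ee ω v w).card.choose 2 else 0) +
      (if w < v then 2 * (Ee ω w v).card.choose 2 else 0) := by
    intro v w
    have hod : ∀ v w, (Ee ω v w).offDiag.card = 2 * (Ee ω v w).card.choose 2 := by
      intro v w
      rw [Finset.offDiag_card, Nat.choose_two_right,
        Nat.mul_div_cancel' (Nat.even_mul_pred_self _).two_dvd, Nat.mul_sub_one]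
    rcases eq_or_ne v w with rfl | hne
    · simp only [lt_irrefl, if_false, add_zero]
      rw [Finset.card_eq_zero, Finset.filter_eq_empty_iff]
      intro p hp h
      have := (Finset.mem_filter.1 hp).2.2.2.2
      simp only [Prod.mk.injEq] at h
      exact this (h.1.trans h.2.symm)
    · have : (Finset.filter (fun p : HE N × HE N => (blk p.1, blk (ω.1 p.1)) = (v, w))
        ((Finset.univ : Finset (HE N × HE N)).filter (fun p =>
        p.1 ≠ p.2 ∧ blk p.1 = blk p.2 ∧ blk (ω.1 p.1) = blk (ω.1 p.2) ∧
        blk p.1 ≠ blk (ω.1 p.1)))) = (Ee ω v w).offDiag := by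
        ext p
        simp only [Finset.mem_filter, Finset.mem_univ, true_and, Finset.mem_offDiag, Ee,
          Prod.mk.injEq]
        constructor
        · rintro ⟨⟨a, b, c, d⟩, e, f⟩
          exact ⟨⟨e, f⟩, ⟨b ▸ e, c ▸ f⟩, a⟩
        · rintro ⟨⟨e, f⟩, ⟨g, h⟩, a⟩
          exact ⟨⟨a, e.trans g.symm, f.trans h.symm, by rw [e, f]; exact hne⟩, e, f⟩
      rw [this, hod]
      rcases lt_or_gt_of_ne hne with hl | hl
      · rw [if_pos hl, if_neg (not_lt.2 hl.le), add_zero]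
      · rw [if_pos hl, if_neg (not_lt.2 hl.le), zero_add, Ee_symm]
  simp only [h1]
  simp only [Finset.sum_add_distrib]
  rw [Finset.sum_comm (f := fun v w => if w < v then 2 * (Ee ω w v).card.choose 2 else 0)]
  have h2 : X2 ω = ∑ v : Fin N, ∑ w : Fin N,
      if v < w then (Ee ω v w).card.choose 2 else 0 := by
    unfold X2
    refine Finset.sum_congr rfl fun v _ => Finset.sum_congr rfl fun w _ => ?_
    split_ifs with h
    · rw [mult_eq ω h.ne]
    · rfl
  have h3 : ∑ v : Fin N, ∑ w : Fin N, (if v < w then 2 * (Ee ω v w).card.choose 2 else 0)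
      = 2 * X2 ω := by
    rw [h2, Finset.mul_sum]
    refine Finset.sum_congr rfl fun v _ => ?_
    rw [Finset.mul_sum]
    refine Finset.sum_congr rfl fun w _ => ?_
    split_ifs <;> simp
  rw [h3]; ring

lemma Tset_X {N : ℕ} (n : ℕ) (ω : Omega N) : (Tset n ω).card = 2 * (n + 1) * X ω (n + 1) := by
  have hd := dvd_Tset n ω
  match n, hd with
  | 0, hd =>
    show _ = 2 * (0 + 1) * X1 ω
    unfold X1
    rw [← card_T0]
    exact (Nat.mul_div_cancel' hd).symm
  | 1, hd =>
    show _ = 2 * (1 + 1) * X2 ω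
    rw [card_T1]
  | n + 2, hd =>
    show _ = 2 * (n + 2 + 1) * Xcyc (n + 3) ω
    unfold Xcyc
    rw [← card_Tcyc (n + 2) (by omega)]
    exact (Nat.mul_div_cancel' hd).symm

end CP

namespace CP
open scoped Classical

noncomputable def wt {m : ℕ} (lam : Fin m → ℝ) (j : Fin m → ℕ) : ℝ :=
  ∏ k, lam k ^ (j k) / (Nat.factorial (j k) : ℝ)

lemma wt_succ {m : ℕ} (lam : Fin m → ℝ) (j : Fin m → ℕ) (k : Fin m) :
    ((j k : ℝ) + 1) * wt lam (j + Pi.single k 1) = lam k * wt lam j := by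
  unfold wt
  rw [← Finset.mul_prod_erase _ _ (Finset.mem_univ k), ← Finset.mul_prod_erase (Finset.univ)
    (fun k => lam k ^ (j k) / (Nat.factorial (j k) : ℝ)) (Finset.mem_univ k)]
  have : ∏ x ∈ Finset.univ.erase k, lam x ^ ((j + Pi.single k 1 : Fin m → ℕ) x) /
      (Nat.factorial ((j + Pi.single k 1 : Fin m → ℕ) x) : ℝ) =
      ∏ x ∈ Finset.univ.erase k, lam x ^ (j x) / (Nat.factorial (j x) : ℝ) := by
    refine Finset.prod_congr rfl fun x hx => ?_
    have : x ≠ k := (Finset.mem_erase.1 hx).1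
    simp [Pi.single_eq_of_ne this]
  rw [this]
  simp only [Pi.add_apply, Pi.single_eq_same, Nat.factorial_succ, pow_succ]
  push_cast
  have h1 : ((j k : ℝ) + 1) ≠ 0 := by positivity
  have h2 : (Nat.factorial (j k) : ℝ) ≠ 0 := by positivity
  field_simp

lemma poisson_abstract {m : ℕ} (l : Filter ℕ) (lam : Fin m → ℝ)
    (p : ℕ → (Fin m → ℕ) → ℝ) (h0 : ∀ N j, 0 ≤ p N j)
    (hrec : ∀ j k, Tendsto (fun N => ((j k : ℝ) + 1) * p N (j + Pi.single k 1) - lam k * p N j)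
      l (𝓝 0))
    (hle : ∀ᶠ N in l, ∀ K, ∑ j ∈ Fintype.piFinset (fun _ : Fin m => Finset.range K), p N j ≤ 1)
    (C : ℝ) (htight : ∀ K : ℕ, 1 ≤ K → ∀ᶠ N in l,
      1 - C / K ≤ ∑ j ∈ Fintype.piFinset (fun _ : Fin m => Finset.range K), p N j)
    (j : Fin m → ℕ) :
    Tendsto (fun N => p N j) l
      (𝓝 (∏ k, exp (-lam k) * lam k ^ (j k) / (Nat.factorial (j k) : ℝ))) := by
  have A : ∀ s : ℕ, ∀ j : Fin m → ℕ, ∑ k, j k = s →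
      Tendsto (fun N => p N j - wt lam j * p N 0) l (𝓝 0) := by
    intro s
    induction s with
    | zero =>
      intro j hj
      have : j = 0 := by
        funext k
        exact (Finset.sum_eq_zero_iff.1 hj) k (Finset.mem_univ _)
      subst this
      simp [wt]; exact tendsto_const_nhds
    | succ s ih =>
      intro j hj
      have : ∃ k, j k ≠ 0 := by
        by_contra! h
        simp [h] at hj
      obtain ⟨k, hk⟩ := this
      set j' : Fin m → ℕ := j - Pi.single k 1 with hj'
      have hjj : j = j' + Pi.single k 1 := by
        funext x
        by_cases hx : x = k
        · subst hx; simp [hj']; omega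
        · simp [hj', Pi.single_eq_of_ne hx]
      have hs : ∑ k, j' k = s := by
        rw [hjj] at hj
        simp only [Pi.add_apply, Finset.sum_add_distrib] at hj
        simpa using hj
      have h1 := hrec j' k
      have h2 := (ih j' hs).const_mul (lam k)
      have h3 := (h1.add h2).div_const ((j' k : ℝ) + 1)
      have hw := wt_succ lam j' k
      rw [hjj]
      have hne : ((j' k : ℝ) + 1) ≠ 0 := by positivity
      convert h3 using 1
      · funext N
        rw [eq_div_iff hne]
        linear_combination (-p N 0) * hw
      · simp
  set S := exp (∑ k, lam k) with hS
  have hSK : Tendsto (fun K : ℕ => ∑ j ∈ Fintype.piFinset (fun _ : Fin m => Finset.range K),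
      wt lam j) atTop (𝓝 S) := by
    have : ∀ K : ℕ, ∑ j ∈ Fintype.piFinset (fun _ : Fin m => Finset.range K), wt lam j =
        ∏ k, ∑ i ∈ Finset.range K, lam k ^ i / (Nat.factorial i : ℝ) := by
      intro K
      rw [Finset.prod_univ_sum]
      rfl
    simp only [this, hS, Real.exp_sum]
    apply tendsto_finsetProd
    intro k _
    have := NormedSpace.expSeries_div_hasSum_exp (𝔸 := ℝ) (lam k)
    rw [← Real.exp_eq_exp_ℝ] at this
    exact this.tendsto_sum_nat
  have B : Tendsto (fun N => p N 0 * S) l (𝓝 1) := by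
    rw [Metric.tendsto_nhds]
    intro ε hε
    have hC : Tendsto (fun K : ℕ => C / (K : ℝ)) atTop (𝓝 0) :=
      tendsto_const_div_atTop_nhds_zero_nat C
    have e1 := (Metric.tendsto_nhds.1 hSK) (ε / 3) (by positivity)
    have e2 := (Metric.tendsto_nhds.1 hC) (ε / 3) (by positivity)
    obtain ⟨K, ⟨hK1, hK2⟩, hK3⟩ := ((e1.and e2).and (eventually_ge_atTop 1)).exists
    have e3 : Tendsto (fun N => ∑ j ∈ Fintype.piFinset (fun _ : Fin m => Finset.range K),
        (p N j - wt lam j * p N 0)) l (𝓝 0) := by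
      have := tendsto_finsetSum (Fintype.piFinset (fun _ : Fin m => Finset.range K))
        (fun j _ => A _ j rfl)
      simpa using this
    filter_upwards [hle, htight K hK3, (Metric.tendsto_nhds.1 e3) (ε / 3) (by positivity)]
      with N n1 n2 n3
    have q1 : p N 0 ≤ 1 := by
      have := n1 1
      have hb : Fintype.piFinset (fun _ : Fin m => Finset.range 1) = {0} := by
        ext f; simp [funext_iff]
      rw [hb] at this
      simpa using this
    have n1' := n1 K
    rw [Finset.sum_sub_distrib, ← Finset.sum_mul] at n3
    rw [Real.dist_eq] at *
    rw [sub_zero] at n3 hK2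
    have q0 := h0 N 0
    set SK := ∑ j ∈ Fintype.piFinset (fun _ : Fin m => Finset.range K), wt lam j
    set SP := ∑ j ∈ Fintype.piFinset (fun _ : Fin m => Finset.range K), p N j
    have r1 : |p N 0 * (SK - S)| < ε / 3 := by
      rw [abs_mul, abs_of_nonneg q0]
      have := abs_nonneg (SK - S)
      nlinarith
    rw [abs_lt] at *
    constructor <;> nlinarith
  have hS0 : S ≠ 0 := (exp_pos _).ne'
  have D : Tendsto (fun N => p N 0) l (𝓝 (exp (-∑ k, lam k))) := by
    have := B.div_const S
    simp only [mul_div_cancel_right₀ _ hS0] at this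
    rwa [one_div, hS, ← Real.exp_neg] at this
  have E := (A _ j rfl).add (D.const_mul (wt lam j))
  have h1 : (fun N => p N j - wt lam j * p N 0 + wt lam j * p N 0) = fun N => p N j := by
    funext N; ring
  rw [h1] at E
  convert E using 2
  rw [zero_add, ← Finset.sum_neg_distrib, Real.exp_sum, wt, ← Finset.prod_mul_distrib]
  refine Finset.prod_congr rfl fun k _ => ?_
  ring

end CP

namespace CP
open scoped Classical

/-- the event that the circuit counts are given by `j` -/
def Ev {N m : ℕ} (j : Fin m → ℕ) (ω : Omega N) : Prop := ∀ n : Fin m, X ω (n + 1) = j n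

noncomputable def pr {m : ℕ} (N : ℕ) (j : Fin m → ℕ) : ℝ :=
  ((Finset.univ.filter (fun ω : Omega N => Ev j ω)).card : ℝ) / Fintype.card (Omega N)

lemma Ev_iff {N m : ℕ} (j : Fin m → ℕ) (ω : Omega N) :
    Ev j ω ↔ ∀ n : Fin m, (Tset n ω).card = 2 * (n + 1) * j n := by
  unfold Ev
  refine forall_congr' fun n => ?_
  rw [Tset_X]
  constructor
  · intro h; rw [h]
  · intro h; exact Nat.eq_of_mul_eq_mul_left (by positivity) h

lemma OM_Ed_univ {N k : ℕ} (t : ZMod (k + 1) → HE N × HE N) :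
    OM (Ed t Finset.univ) = Finset.univ.filter (fun ω : Omega N => Sub t ω) := by
  ext ω
  rw [mem_OM, Finset.mem_filter]
  simp [Ed, Sub]

lemma Sub_card {N k : ℕ} {t : ZMod (k + 1) → HE N × HE N} (ht : IsT k t) (D : ℕ)
    (hD : D + 2 * (k + 1) + 1 ≤ 3 * N) :
    D ^ (k + 1) * (Finset.univ.filter (fun ω : Omega N => Sub t ω)).card ≤ Fintype.card (Omega N) ∧
    Fintype.card (Omega N) ≤
      (3 * N) ^ (k + 1) * (Finset.univ.filter (fun ω : Omega N => Sub t ω)).card := by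
  have h := ext_card ht ∅ Finset.univ (by simp [V]) D (by simp [ZMod.card]; omega)
  rw [OM_empty, Finset.empty_union, Finset.card_univ, Finset.card_univ, ZMod.card, OM_Ed_univ] at h
  exact h

lemma tmpl_bound {N m : ℕ} (k : Fin m) {t : ZMod ((k : ℕ) + 1) → HE N × HE N} (ht : IsT k t)
    (hN : 2 * ((k : ℕ) + 1 + m) + 1 ≤ 2 * N) (hpos : 0 < Fintype.card (Omega N))
    (j : Fin m → ℕ) :
    |(((Finset.univ.filter (fun ω : Omega N => Ev (j + Pi.single k 1) ω)).filter
        (fun ω => Sub t ω)).card : ℝ) -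
      (Finset.univ.filter (fun ω : Omega N => Sub t ω)).card * pr N j| ≤
      (((k : ℕ) + 1) * (3 * Cst k m) + 1) / N *
        (Finset.univ.filter (fun ω : Omega N => Sub t ω)).card := by
  set S := Finset.univ.filter (fun ω : Omega N => Sub t ω) with hS
  obtain ⟨Q, hQ⟩ : ∃ Q : Omega N → Prop, ∀ ω, Q ω ↔
    ∀ n : Fin m, (T' n t ω).card = 2 * (n + 1) * j n := ⟨_, fun _ => Iff.rfl⟩
  have hc := chain_prob ht hN hpos Q (by
    intro ω ω' h
    rw [hQ, hQ]
    refine forall_congr' fun n => ?_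
    rw [h n n.2]) Finset.univ
  have hspos := OM_pos ht Finset.univ (by omega) hpos
  rw [OM_Ed_univ, ← hS] at hc hspos
  rw [Finset.card_univ, ZMod.card] at hc
  have hSQ : (Finset.univ.filter (fun ω : Omega N => Ev (j + Pi.single k 1) ω)).filter
        (fun ω => Sub t ω) = S.filter Q := by
    ext ω
    simp only [hS, Finset.mem_filter, Finset.mem_univ, true_and]
    rw [and_comm]
    refine and_congr_right fun hs => ?_
    rw [Ev_iff, hQ]
    refine forall_congr' fun n => ?_
    rw [Tset_card_of_Sub ht hs]
    by_cases hnk : n = k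
    · subst hnk
      simp [Pi.single_eq_same, mul_add]
    · have : (n : ℕ) ≠ k := fun h => hnk (Fin.ext h)
      simp [this, Pi.single_eq_of_ne hnk]
  rw [hSQ]
  have hNs : N * S.card ≤ Fintype.card (Omega N) := by
    have h := (Sub_card ht N (by omega)).1
    rw [← hS] at h
    refine le_trans ?_ h
    exact Nat.mul_le_mul_right _ (Nat.le_self_pow (by omega) N)
  have h1 : (Finset.univ.filter Q).card ≤
      (Finset.univ.filter (fun ω : Omega N => Ev j ω)).card + S.card := by
    refine le_trans (Finset.card_le_card ?_) (Finset.card_union_le _ _)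
    intro ω
    simp only [hS, Finset.mem_filter, Finset.mem_univ, true_and, Finset.mem_union]
    intro h
    by_cases hs : Sub t ω
    · exact Or.inr hs
    · left
      rw [Ev_iff]
      intro n
      rw [← T'_of_not_Sub ht hs]
      exact (hQ ω).1 h n
  have h2 : (Finset.univ.filter (fun ω : Omega N => Ev j ω)).card ≤
      (Finset.univ.filter Q).card + S.card := by
    refine le_trans (Finset.card_le_card ?_) (Finset.card_union_le _ _)
    intro ω
    simp only [hS, Finset.mem_filter, Finset.mem_univ, true_and, Finset.mem_union]
    intro h
    by_cases hs : Sub t ω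
    · exact Or.inr hs
    · left
      rw [Ev_iff] at h
      rw [hQ]
      intro n
      rw [T'_of_not_Sub ht hs]
      exact h n
  have hNpos : (0 : ℝ) < N := by
    have : 0 < N := by omega
    exact_mod_cast this
  have hposR : (0 : ℝ) < Fintype.card (Omega N) := by exact_mod_cast hpos
  have hsR : (0 : ℝ) < S.card := by exact_mod_cast hspos
  have h1R : ((Finset.univ.filter Q).card : ℝ) ≤
      (Finset.univ.filter (fun ω : Omega N => Ev j ω)).card + S.card := by exact_mod_cast h1
  have h2R : ((Finset.univ.filter (fun ω : Omega N => Ev j ω)).card : ℝ) ≤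
      (Finset.univ.filter Q).card + S.card := by exact_mod_cast h2
  have hNsR : (N : ℝ) * S.card ≤ Fintype.card (Omega N) := by exact_mod_cast hNs
  have h3 : |((Finset.univ.filter Q).card : ℝ) / Fintype.card (Omega N) - pr N j| ≤ 1 / N := by
    unfold pr
    rw [← sub_div, abs_div, abs_of_pos hposR, div_le_div_iff₀ hposR hNpos]
    have : |((Finset.univ.filter Q).card : ℝ) -
      (Finset.univ.filter (fun ω : Omega N => Ev j ω)).card| ≤ S.card := by
      rw [abs_le]; constructor <;> linarith
    nlinarith
  have h4 : |((S.filter Q).card : ℝ) / S.card - pr N j| ≤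
      (((k : ℕ) + 1) * (3 * Cst k m) + 1) / N := by
    have := abs_sub_le (((S.filter Q).card : ℝ) / S.card)
      (((Finset.univ.filter Q).card : ℝ) / Fintype.card (Omega N)) (pr N j)
    rw [abs_sub_comm (((S.filter Q).card : ℝ) / S.card)
      (((Finset.univ.filter Q).card : ℝ) / Fintype.card (Omega N))] at this
    refine this.trans ((add_le_add hc h3).trans (le_of_eq ?_))
    push_cast
    ring
  have h5 : ((S.filter Q).card : ℝ) - S.card * pr N j =
      (((S.filter Q).card : ℝ) / S.card - pr N j) * S.card := by
    field_simp
  rw [h5, abs_mul, abs_of_pos hsR]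
  exact mul_le_mul_of_nonneg_right h4 hsR.le

/-- expected number of traversals -/
noncomputable def sN (k N : ℕ) : ℝ :=
  (∑ u ∈ (Finset.univ.filter (IsT (N := N) k)),
    ((Finset.univ.filter (fun ω : Omega N => Sub u ω)).card : ℝ)) / Fintype.card (Omega N)

lemma sN_eq (k N : ℕ) : sN k N =
    (∑ ω : Omega N, ((2 * (k + 1) * X ω (k + 1) : ℕ) : ℝ)) / Fintype.card (Omega N) := by
  have h := sum_swap (N := N) (n := k) Finset.univ (fun _ => True)
  simp only [Finset.filter_true] at h
  unfold sN
  congr 1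
  rw [← Nat.cast_sum, ← Nat.cast_sum]
  rw [← h]
  simp_rw [Tset_X]

lemma rec_bound {N m : ℕ} (k : Fin m)
    (hN : 2 * ((k : ℕ) + 1 + m) + 1 ≤ 2 * N) (hpos : 0 < Fintype.card (Omega N))
    (j : Fin m → ℕ) :
    |2 * ((k : ℕ) + 1) * ((j k : ℝ) + 1) * pr N (j + Pi.single k 1) - sN k N * pr N j| ≤
      (((k : ℕ) + 1) * (3 * Cst k m) + 1) / N * sN k N := by
  have hposR : (0 : ℝ) < Fintype.card (Omega N) := by exact_mod_cast hpos
  set E := Finset.univ.filter (fun ω : Omega N => Ev (j + Pi.single k 1) ω) with hE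
  have h := sum_swap (N := N) (n := k) E (fun _ => True)
  simp only [Finset.filter_true] at h
  have h0 : ∑ ω ∈ E, (Tset k ω).card = 2 * ((k : ℕ) + 1) * (j k + 1) * E.card := by
    rw [Finset.sum_congr rfl (g := fun _ => 2 * ((k : ℕ) + 1) * (j k + 1))]
    · simp [mul_comm]
    · intro ω hω
      rw [hE, Finset.mem_filter, Ev_iff] at hω
      rw [hω.2 k]
      simp
  rw [h0] at h
  have hR : 2 * ((k : ℕ) + 1) * ((j k : ℝ) + 1) * E.card =
      ∑ u ∈ (Finset.univ.filter (IsT (N := N) k)), ((E.filter (fun ω => Sub u ω)).card : ℝ) := by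
    exact_mod_cast h
  have h1 : 2 * ((k : ℕ) + 1) * ((j k : ℝ) + 1) * pr N (j + Pi.single k 1) - sN k N * pr N j =
      (∑ u ∈ (Finset.univ.filter (IsT (N := N) k)), (((E.filter (fun ω => Sub u ω)).card : ℝ) -
        (Finset.univ.filter (fun ω : Omega N => Sub u ω)).card * pr N j)) /
          Fintype.card (Omega N) := by
    rw [Finset.sum_sub_distrib, ← hR, ← Finset.sum_mul]
    unfold sN
    rw [show pr N (j + Pi.single k 1) = (E.card : ℝ) / Fintype.card (Omega N) from rfl]
    ring
  rw [h1, abs_div, abs_of_pos hposR]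
  unfold sN
  rw [← mul_div_assoc]
  refine div_le_div_of_nonneg_right ?_ hposR.le
  refine (Finset.abs_sum_le_sum_abs _ _).trans ?_
  rw [Finset.mul_sum]
  refine Finset.sum_le_sum fun u hu => ?_
  rw [Finset.mem_filter] at hu
  exact tmpl_bound k hu.2 hN hpos j

lemma Omega_pos {N : ℕ} (hN : Even N) : 0 < Fintype.card (Omega N) := by
  rw [Fintype.card_pos_iff]
  obtain ⟨r, hr⟩ := hN
  let f : Fin (3 * N) → Fin (3 * N) := fun a =>
    ⟨if a.val % 2 = 0 then a.val + 1 else a.val - 1, by have := a.2; split_ifs <;> omega⟩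
  have hf : ∀ a, f (f a) = a := by
    intro a
    apply Fin.ext
    simp only [f]
    split_ifs <;> omega
  refine ⟨⟨⟨f, f, hf, hf⟩, fun a => ⟨hf a, ?_⟩⟩⟩
  intro h
  have := congrArg Fin.val h
  simp only [Equiv.coe_fn_mk, f] at this
  split_ifs at this <;> omega

lemma sN_bounds {k N : ℕ} (hN : 2 * k + 3 < 3 * N) (hk : k ≤ N) (hpos : 0 < Fintype.card (Omega N)) :
    (6 * ((N : ℝ) - k) / (3 * N)) ^ (k + 1) ≤ sN k N ∧
    sN k N ≤ (6 * (N : ℝ) / (3 * N - (2 * k + 3))) ^ (k + 1) := by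
  have hposR : (0 : ℝ) < Fintype.card (Omega N) := by exact_mod_cast hpos
  have hNpos : (0 : ℝ) < N := by
    have : 0 < N := by omega
    exact_mod_cast this
  obtain ⟨D, hD⟩ : ∃ D, D + (2 * k + 3) = 3 * N := ⟨3 * N - (2 * k + 3), by omega⟩
  have hDR : (3 * (N : ℝ) - (2 * k + 3)) = D := by
    have : (D : ℝ) + (2 * k + 3) = 3 * N := by exact_mod_cast hD
    linarith
  have hDpos : (0 : ℝ) < D := by
    have : 0 < D := by omega
    exact_mod_cast this
  have hc := templates_card N k
  have hdl : ((N : ℝ) - k) ^ (k + 1) ≤ (N.descFactorial (k + 1) : ℝ) := by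
    have := Nat.pow_sub_le_descFactorial N (k + 1)
    have h2 : N + 1 - (k + 1) = N - k := by omega
    rw [h2] at this
    rw [← Nat.cast_sub hk]
    exact_mod_cast this
  have hdu : (N.descFactorial (k + 1) : ℝ) ≤ (N : ℝ) ^ (k + 1) := by
    exact_mod_cast Nat.descFactorial_le_pow N (k + 1)
  have hS : ∀ u ∈ (Finset.univ.filter (IsT (N := N) k)),
      (D : ℝ) ^ (k + 1) * ((Finset.univ.filter (fun ω : Omega N => Sub u ω)).card : ℝ) ≤
        Fintype.card (Omega N) ∧ (Fintype.card (Omega N) : ℝ) ≤ (3 * (N : ℝ)) ^ (k + 1) *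
        ((Finset.univ.filter (fun ω : Omega N => Sub u ω)).card : ℝ) := by
    intro u hu
    rw [Finset.mem_filter] at hu
    have := Sub_card hu.2 D (by omega)
    exact ⟨by exact_mod_cast this.1, by exact_mod_cast this.2⟩
  have hcR : (((Finset.univ : Finset (ZMod (k + 1) → HE N × HE N)).filter (IsT k)).card : ℝ) =
      6 ^ (k + 1) * N.descFactorial (k + 1) := by exact_mod_cast hc
  unfold sN
  rw [hDR]
  constructor
  · rw [div_pow, mul_pow, div_le_div_iff₀ (by positivity) hposR]
    have := Finset.sum_le_sum fun u hu => (hS u hu).2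
    rw [Finset.sum_const, nsmul_eq_mul, hcR, ← Finset.mul_sum] at this
    rw [mul_comm (Finset.sum _ _)]
    refine le_trans ?_ this
    gcongr
  · rw [div_pow, mul_pow, div_le_div_iff₀ hposR (by positivity)]
    have := Finset.sum_le_sum fun u hu => (hS u hu).1
    rw [Finset.sum_const, nsmul_eq_mul, hcR, ← Finset.mul_sum] at this
    rw [mul_comm (Finset.sum _ _)]
    refine le_trans this ?_
    gcongr

lemma sN_tendsto (k : ℕ) :
    Tendsto (fun N => sN k N) (atTop ⊓ 𝓟 {N : ℕ | Even N}) (𝓝 (2 ^ (k + 1))) := by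
  have hinv : Tendsto (fun N : ℕ => ((N : ℝ))⁻¹) atTop (𝓝 0) := tendsto_inv_atTop_nhds_zero_nat
  have hl : Tendsto (fun N : ℕ => (6 * ((N : ℝ) - k) / (3 * N)) ^ (k + 1)) atTop
      (𝓝 (2 ^ (k + 1))) := by
    apply Tendsto.pow
    have h : Tendsto (fun N : ℕ => 2 * (1 - k * ((N : ℝ))⁻¹)) atTop (𝓝 (2 * (1 - k * 0))) :=
      (((hinv.const_mul (k : ℝ)).const_sub 1).const_mul 2)
    simp only [mul_zero, sub_zero, mul_one] at h
    refine h.congr' ?_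
    filter_upwards [eventually_gt_atTop 0] with N hN
    have : (N : ℝ) ≠ 0 := by positivity
    field_simp
    ring
  have hu : Tendsto (fun N : ℕ => (6 * (N : ℝ) / (3 * N - (2 * k + 3))) ^ (k + 1)) atTop
      (𝓝 (2 ^ (k + 1))) := by
    apply Tendsto.pow
    have h : Tendsto (fun N : ℕ => 6 / (3 - (2 * k + 3) * ((N : ℝ))⁻¹)) atTop
        (𝓝 (6 / (3 - (2 * k + 3) * 0))) :=
      Tendsto.div tendsto_const_nhds ((hinv.const_mul ((2 * k + 3 : ℝ))).const_sub 3)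
        (by norm_num)
    rw [show (6 : ℝ) / (3 - (2 * k + 3) * 0) = 2 by norm_num] at h
    refine h.congr' ?_
    filter_upwards [eventually_gt_atTop 0] with N hN
    have : (N : ℝ) ≠ 0 := by positivity
    rw [show (3 : ℝ) - (2 * k + 3) * (N : ℝ)⁻¹ = (3 * N - (2 * k + 3)) / N by field_simp]
    rw [div_div_eq_mul_div]
  have hev : ∀ᶠ N : ℕ in atTop ⊓ 𝓟 {N : ℕ | Even N}, 2 * k + 3 < N ∧ Even N := by
    rw [eventually_inf_principal]
    filter_upwards [eventually_gt_atTop (2 * k + 3)] with N hN he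
    exact ⟨hN, he⟩
  refine tendsto_of_tendsto_of_tendsto_of_le_of_le' (hl.mono_left inf_le_left)
    (hu.mono_left inf_le_left) ?_ ?_
  · filter_upwards [hev] with N hN
    exact (sN_bounds (by omega) (by omega) (Omega_pos hN.2)).1
  · filter_upwards [hev] with N hN
    exact (sN_bounds (by omega) (by omega) (Omega_pos hN.2)).2

lemma pr_nonneg {m : ℕ} (N : ℕ) (j : Fin m → ℕ) : 0 ≤ pr N j := by unfold pr; positivity

lemma pr_le_one {m : ℕ} (N : ℕ) (j : Fin m → ℕ) : pr N j ≤ 1 := by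
  unfold pr
  apply div_le_one_of_le₀ _ (by positivity)
  exact_mod_cast Finset.card_le_univ _

lemma pr_sum {m : ℕ} (N K : ℕ) :
    ∑ j ∈ Fintype.piFinset (fun _ : Fin m => Finset.range K), pr N j =
      ((Finset.univ.filter (fun ω : Omega N => ∀ n : Fin m, X ω (n + 1) < K)).card : ℝ) /
        Fintype.card (Omega N) := by
  unfold pr
  rw [← Finset.sum_div, ← Nat.cast_sum]
  congr 2
  rw [Finset.card_eq_sum_card_fiberwise (f := fun ω (n : Fin m) => X ω (n + 1))
    (t := Fintype.piFinset (fun _ : Fin m => Finset.range K))]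
  · refine Finset.sum_congr rfl fun j hj => ?_
    congr 1
    ext ω
    simp only [Fintype.mem_piFinset, Finset.mem_range] at hj
    simp only [Finset.mem_filter, Finset.mem_univ, true_and]
    unfold Ev
    constructor
    · intro h
      exact ⟨fun n => by rw [h n]; exact hj n, funext h⟩
    · intro h n
      exact congrFun h.2 n
  · intro ω hω
    simpa using hω

lemma markov {N : ℕ} (n K : ℕ) (hK : 1 ≤ K) :
    ((Finset.univ.filter (fun ω : Omega N => ¬ X ω (n + 1) < K)).card : ℝ) /
      Fintype.card (Omega N) ≤ sN n N / K := by
  rw [sN_eq, div_right_comm]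
  refine div_le_div_of_nonneg_right ?_ (by positivity)
  have hKR : (0 : ℝ) < K := by exact_mod_cast hK
  rw [le_div_iff₀ hKR, ← Nat.cast_sum]
  norm_cast
  rw [Finset.card_filter, Finset.sum_mul]
  refine Finset.sum_le_sum fun ω _ => ?_
  split_ifs with h
  · simp
  · nlinarith [Nat.zero_le (n * X ω (n+1))]

theorem main_limit {m : ℕ} (j : Fin m → ℕ) :
    Tendsto (fun N => pr N j) (atTop ⊓ 𝓟 {N : ℕ | Even N})
      (𝓝 (∏ k : Fin m, exp (-((2 : ℝ) ^ ((k : ℕ) + 1) / (2 * ((k : ℕ) + 1)))) *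
        ((2 : ℝ) ^ ((k : ℕ) + 1) / (2 * ((k : ℕ) + 1))) ^ (j k) / (Nat.factorial (j k) : ℝ))) := by
  have hev : ∀ M : ℕ, ∀ᶠ N : ℕ in atTop ⊓ 𝓟 {N : ℕ | Even N}, M < N ∧ Even N := by
    intro M
    rw [eventually_inf_principal]
    filter_upwards [eventually_gt_atTop M] with N hN he
    exact ⟨hN, he⟩
  refine poisson_abstract _ (fun k : Fin m => (2 : ℝ) ^ ((k : ℕ) + 1) / (2 * ((k : ℕ) + 1))) pr
    pr_nonneg ?_ ?_ (∑ k : Fin m, ((2 : ℝ) ^ ((k : ℕ) + 1) + 1)) ?_ j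
  · intro j k
    have hinv : Tendsto (fun N : ℕ => ((N : ℝ))⁻¹) (atTop ⊓ 𝓟 {N : ℕ | Even N}) (𝓝 0) :=
      tendsto_inv_atTop_nhds_zero_nat.mono_left inf_le_left
    have hs := sN_tendsto k
    set A : ℝ := ((k : ℕ) + 1) * (3 * Cst k m) + 1
    have hb : Tendsto (fun N : ℕ => (A * ((N : ℝ))⁻¹ * sN k N +
        |sN k N - 2 ^ ((k : ℕ) + 1)|) / (2 * ((k : ℕ) + 1))) (atTop ⊓ 𝓟 {N : ℕ | Even N}) (𝓝 0) := by
      have := ((((hinv.const_mul A).mul hs).add ((hs.sub_const (2 ^ ((k : ℕ) + 1))).abs)).div_const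
        ((2 : ℝ) * ((k : ℕ) + 1)))
      simpa using this
    refine squeeze_zero_norm' ?_ hb
    filter_upwards [hev (k + 1 + m)] with N hN
    have hr := rec_bound k (by omega) (Omega_pos hN.2) j
    have hk : (0 : ℝ) < 2 * ((k : ℕ) + 1) := by positivity
    rw [Real.norm_eq_abs, le_div_iff₀ hk]
    rw [show |((j k : ℝ) + 1) * pr N (j + Pi.single k 1) -
        (2 : ℝ) ^ ((k : ℕ) + 1) / (2 * ((k : ℕ) + 1)) * pr N j| * (2 * ((k : ℕ) + 1)) =
        |(2 * ((k : ℕ) + 1) * ((j k : ℝ) + 1) * pr N (j + Pi.single k 1) - sN k N * pr N j) +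
          (sN k N - 2 ^ ((k : ℕ) + 1)) * pr N j| by
      rw [← abs_of_pos hk, ← abs_mul, abs_of_pos hk]
      congr 1
      field_simp
      ring]
    refine (abs_add_le _ _).trans (add_le_add ?_ ?_)
    · rw [← div_eq_mul_inv]; exact hr
    · rw [abs_mul, abs_of_nonneg (pr_nonneg N j)]
      exact mul_le_of_le_one_right (abs_nonneg _) (pr_le_one N j)
  · refine Eventually.of_forall fun N K => ?_
    rw [pr_sum]
    apply div_le_one_of_le₀ _ (by positivity)
    exact_mod_cast Finset.card_le_univ _
  · intro K hK
    have hsb : ∀ᶠ N in atTop ⊓ 𝓟 {N : ℕ | Even N}, ∀ k : Fin m,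
        sN k N ≤ (2 : ℝ) ^ ((k : ℕ) + 1) + 1 := by
      rw [eventually_all]
      intro k
      exact (sN_tendsto k).eventually_le_const (lt_add_one _)
    filter_upwards [hsb, hev 0] with N hN h0
    have hpos := Omega_pos h0.2
    have hposR : (0 : ℝ) < Fintype.card (Omega N) := by exact_mod_cast hpos
    rw [pr_sum]
    have h1 : Fintype.card (Omega N) ≤
        (Finset.univ.filter (fun ω : Omega N => ∀ n : Fin m, X ω (n + 1) < K)).card +
        ∑ n : Fin m, (Finset.univ.filter (fun ω : Omega N => ¬ X ω (n + 1) < K)).card := by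
      rw [← Finset.card_univ]
      refine le_trans (Finset.card_le_card (t := (Finset.univ.filter
        (fun ω : Omega N => ∀ n : Fin m, X ω (n + 1) < K)) ∪ Finset.univ.biUnion
        (fun n : Fin m => Finset.univ.filter (fun ω : Omega N => ¬ X ω (n + 1) < K))) ?_)
        ((Finset.card_union_le _ _).trans (Nat.add_le_add_left Finset.card_biUnion_le _))
      intro ω _
      simp only [Finset.mem_union, Finset.mem_filter, Finset.mem_univ, true_and,
        Finset.mem_biUnion]
      by_cases h : ∀ n : Fin m, X ω (n + 1) < K
      · exact Or.inl h
      · right; push Not at h ⊢; exact h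
    have h2 : (Fintype.card (Omega N) : ℝ) ≤
        (Finset.univ.filter (fun ω : Omega N => ∀ n : Fin m, X ω (n + 1) < K)).card +
        ∑ n : Fin m, ((Finset.univ.filter (fun ω : Omega N => ¬ X ω (n + 1) < K)).card : ℝ) := by
      exact_mod_cast h1
    have h3 := div_le_div_of_nonneg_right h2 hposR.le
    rw [div_self hposR.ne', add_div, Finset.sum_div] at h3
    have h4 : ∑ n : Fin m, ((Finset.univ.filter (fun ω : Omega N => ¬ X ω (n + 1) < K)).card : ℝ) /
        Fintype.card (Omega N) ≤ (∑ k : Fin m, ((2 : ℝ) ^ ((k : ℕ) + 1) + 1)) / K := by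
      rw [Finset.sum_div]
      refine Finset.sum_le_sum fun n _ => (markov n K hK).trans ?_
      exact div_le_div_of_nonneg_right (hN n) (by positivity)
    linarith

end CP

/-- Theorem (Bollobás): the short circuit counts converge jointly in distribution to
independent Poisson variables with means `λ_i = 2^i/(2i)`. -/
theorem circuit_counts_poisson_limit (m : ℕ) (hm : 1 ≤ m) (j : ℕ → ℕ) :
    Tendsto
      (fun N : ℕ =>
        (Nat.card {ω : Omega N // ∀ i ∈ Finset.Icc 1 m, X ω i = j i} : ℝ) /
          (Nat.card (Omega N) : ℝ))
      (atTop ⊓ 𝓟 {N : ℕ | Even N})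
      (𝓝 (∏ i ∈ Finset.Icc 1 m,
        Real.exp (-((2 : ℝ) ^ i / (2 * i))) * ((2 : ℝ) ^ i / (2 * i)) ^ (j i) /
          (Nat.factorial (j i) : ℝ))) := by
  classical
  have h := CP.main_limit (fun n : Fin m => j (n + 1))
  have hIcc : Finset.Icc 1 m = (Finset.range m).image (fun n => n + 1) := by
    ext i
    simp only [Finset.mem_Icc, Finset.mem_image, Finset.mem_range]
    constructor
    · intro hi; exact ⟨i - 1, by omega, by omega⟩
    · rintro ⟨a, ha, rfl⟩; omega
  have hprod : (∏ i ∈ Finset.Icc 1 m,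
        Real.exp (-((2 : ℝ) ^ i / (2 * i))) * ((2 : ℝ) ^ i / (2 * i)) ^ (j i) /
          (Nat.factorial (j i) : ℝ)) = (∏ k : Fin m, exp (-((2 : ℝ) ^ ((k : ℕ) + 1) /
          (2 * ((k : ℕ) + 1)))) * ((2 : ℝ) ^ ((k : ℕ) + 1) / (2 * ((k : ℕ) + 1))) ^
          (j ((k : ℕ) + 1)) / (Nat.factorial (j ((k : ℕ) + 1)) : ℝ)) := by
    rw [hIcc, Finset.prod_image (fun a _ b _ hab => by simpa using hab), Finset.prod_range]
    refine Finset.prod_congr rfl fun k _ => ?_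
    push_cast
    rfl
  rw [hprod]
  refine h.congr fun N => ?_
  unfold CP.pr
  rw [Nat.card_eq_fintype_card, Nat.card_eq_fintype_card, Fintype.card_subtype]
  congr 3
  ext ω
  simp only [Finset.mem_filter, Finset.mem_univ, true_and]
  unfold CP.Ev
  constructor
  · intro hh i hi
    rw [Finset.mem_Icc] at hi
    have := hh ⟨i - 1, by omega⟩
    simp only [Nat.sub_add_cancel hi.1] at this
    exact this
  · intro hh n
    exact hh _ (by rw [Finset.mem_Icc]; have := n.2; omega)
end

section
/- Let H be a fixed finite simple graph with vertex set V and edge set E, both nonempty, such that |E| > |V|. Then there exists a constant C > 0 such that for every even N, the expected number of copies of H in the configuration-model multigraph Γ(ω) is at most C/N; here the number of copies of H in Γ(ω) is the number of pairs (f, g) where f : V → Fin N is injective, g is an injective map from E to the set of matched pairs of ω, and for every edge {x,y} ∈ E the matched pair g({x,y}) consists of one half-edge in block B_{f(x)} and one half-edge in block B_{f(y)}. -/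
open Filter Real Topology

/-- The number of copies of a simple graph `H` in the multigraph `Γ(ω)`: pairs `(f, g)`
of an injection `f` of the vertices of `H` into the blocks and an injection `g` of the
edges of `H` into the matched pairs of `ω`, such that the matched pair assigned to an
edge `{x, y}` consists of one half-edge in `B_{f x}` and one in `B_{f y}`. -/
noncomputable def copies {V : Type*} (H : SimpleGraph V) {N : ℕ} (ω : Omega N) : ℕ :=
  Nat.card {fg : (V → Fin N) × (H.edgeSet → Sym2 (Fin (3 * N))) //
    Function.Injective fg.1 ∧ Function.Injective fg.2 ∧
      ∀ e : H.edgeSet, (∃ a, fg.2 e = s(a, ω.val a)) ∧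
        Sym2.map blk (fg.2 e) = Sym2.map fg.1 e.val}


open Classical in
/-- The matchings that contain all the pairs in `T`. -/
noncomputable def containing {N : ℕ} (T : Finset (Sym2 (Fin (3 * N)))) : Finset (Omega N) :=
  Finset.univ.filter fun ω => ∀ p ∈ T, ∃ a, p = s(a, ω.val a)

/-- Conjugation of a matching by a transposition. -/
def conjSwap {N : ℕ} (b c : Fin (3 * N)) (ω : Omega N) : Omega N :=
  ⟨Equiv.swap b c * ω.val * Equiv.swap b c, by
    intro a
    have h := ω.2 (Equiv.swap b c a)
    refine ⟨by simp [h.1], fun h' => h.2 ?_⟩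
    have := congrArg (Equiv.swap b c) h'
    simpa using this⟩

lemma conjSwap_apply {N : ℕ} (b c : Fin (3 * N)) (ω : Omega N) (x : Fin (3 * N)) :
    (conjSwap b c ω).val x = Equiv.swap b c (ω.val (Equiv.swap b c x)) := rfl

lemma conjSwap_injective {N : ℕ} (b c : Fin (3 * N)) :
    Function.Injective (conjSwap (N := N) b c) := by
  intro ω ω' h
  apply Subtype.ext
  have h1 : Equiv.swap b c * ω.val * Equiv.swap b c
      = Equiv.swap b c * ω'.val * Equiv.swap b c := congrArg Subtype.val h
  simpa using h1

lemma containing_insert {N : ℕ} (k : ℕ) (T : Finset (Sym2 (Fin (3 * N)))) (p : Sym2 (Fin (3 * N)))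
    (hp : p ∉ T) (hk : T.card + 1 ≤ k) [DecidableEq (Sym2 (Fin (3 * N)))] :
    (containing (insert p T)).card * (3 * N) ≤ (containing T).card * (2 * k) := by
  classical
  rcases (containing (insert p T)).eq_empty_or_nonempty with h0 | ⟨ω0, hω0⟩
  · simp [h0]
  have mem : ∀ (T : Finset (Sym2 (Fin (3 * N)))) ω, ω ∈ containing T ↔
      ∀ p ∈ T, ∃ a, p = s(a, ω.val a) := by
    intro T ω; simp [containing]
  obtain ⟨a, ha⟩ := (mem _ _).1 hω0 p (Finset.mem_insert_self _ _)
  set b := ω0.val a with hb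
  have hab : b ≠ a := (ω0.2 a).2
  -- basic fact: a half-edge in a contained pair determines it
  have det : ∀ (ω : Omega N) (q : Sym2 (Fin (3 * N))) (x : Fin (3 * N)),
      (∃ y, q = s(y, ω.val y)) → x ∈ q → q = s(x, ω.val x) := by
    rintro ω q x ⟨y, rfl⟩ hx
    rcases Sym2.mem_iff.1 hx with rfl | rfl
    · rfl
    · rw [(ω.2 y).1, Sym2.eq_swap]
  have hωab : ∀ ω ∈ containing (insert p T), ω.val a = b := by
    intro ω hω
    have h1 := det ω p a ((mem _ _).1 hω p (Finset.mem_insert_self _ _)) (by simp [ha])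
    rw [ha] at h1
    exact (Sym2.congr_right.1 h1).symm
  -- no pair of `T` contains `a` or `b`
  have hT : ∀ q ∈ T, a ∉ q ∧ b ∉ q := by
    intro q hq
    have hex := (mem _ _).1 hω0 q (Finset.mem_insert_of_mem hq)
    constructor
    · intro h
      apply hp
      rw [ha, hb, ← det ω0 q a hex h]; exact hq
    · intro h
      apply hp
      have := det ω0 q b hex h
      rw [hb, (ω0.2 a).1, Sym2.eq_swap] at this
      rw [ha, hb, ← this]; exact hq
  let U : Finset (Fin (3 * N)) := T.biUnion fun q => Finset.univ.filter (fun c => c ∈ q)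
  have hU : U.card ≤ T.card * 2 := by
    apply Finset.card_biUnion_le_card_mul
    intro q _
    induction q using Sym2.ind with
    | _ x y =>
      calc _ ≤ ({x, y} : Finset (Fin (3 * N))).card := by
            apply Finset.card_le_card
            intro c hc
            simpa using hc
        _ ≤ 2 := Finset.card_le_two
  have memU : ∀ c, c ∈ U ↔ ∃ q ∈ T, c ∈ q := by intro c; simp [U]
  let D : Finset (Fin (3 * N)) := Finset.univ \ (insert a U)
  have memD : ∀ c, c ∈ D ↔ c ≠ a ∧ c ∉ U := by intro c; simp [D]
  have hD : 3 * N ≤ D.card + (2 * T.card + 1) := by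
    have h1 : D.card = 3 * N - (insert a U).card := by
      simp [D, Finset.card_sdiff]
    have h2 := Finset.card_insert_le a U
    omega
  have hD1 : 1 ≤ D.card := by
    apply Finset.card_pos.2
    refine ⟨b, (memD b).2 ⟨hab, ?_⟩⟩
    rw [memU]
    rintro ⟨q, hq, hbq⟩
    exact (hT q hq).2 hbq
  have hD2 : 3 * N ≤ 2 * k * D.card := by
    obtain ⟨d, hd⟩ := Nat.exists_eq_add_of_le hD1
    rw [hd] at hD ⊢
    nlinarith [Nat.zero_le (d * k), Nat.zero_le (d * (k - 1)), Nat.mul_le_mul_left d (show 1 ≤ k by omega)]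
  have key : D.card * (containing (insert p T)).card ≤ (containing T).card := by
    have : (D ×ˢ containing (insert p T)).card ≤ (containing T).card := by
      apply Finset.card_le_card_of_injOn (fun cw => conjSwap b cw.1 cw.2)
      · rintro ⟨c, ω⟩ hcw
        simp only [Finset.coe_product, Set.mem_prod, Finset.mem_coe] at hcw
        obtain ⟨hc, hω⟩ := hcw
        rw [memD, memU] at hc
        simp only [Finset.mem_coe]
        rw [mem]
        intro q hq
        obtain ⟨x, hx⟩ := (mem _ _).1 hω q (Finset.mem_insert_of_mem hq)
        refine ⟨x, ?_⟩
        have hbq := (hT q hq).2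
        have hcq : c ∉ q := fun h => hc.2 ⟨q, hq, h⟩
        have hxq : x ∈ q := by simp [hx]
        have hwq : ω.val x ∈ q := by simp [hx]
        have e1 : Equiv.swap b c x = x :=
          Equiv.swap_apply_of_ne_of_ne (fun h => hbq (h ▸ hxq)) (fun h => hcq (h ▸ hxq))
        have e2 : Equiv.swap b c (ω.val x) = ω.val x :=
          Equiv.swap_apply_of_ne_of_ne (fun h => hbq (h ▸ hwq)) (fun h => hcq (h ▸ hwq))
        rw [conjSwap_apply, e1, e2, hx]
      · have val : ∀ c ω, c ∈ D → ω ∈ containing (insert p T) →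
            (conjSwap b c ω).val a = c := by
          intro c ω hc hω
          rw [memD] at hc
          rw [conjSwap_apply, Equiv.swap_apply_of_ne_of_ne hab.symm hc.1.symm, hωab ω hω,
            Equiv.swap_apply_left]
        rintro ⟨c, ω⟩ h1 ⟨c', ω'⟩ h2 h
        simp only [Finset.coe_product, Set.mem_prod, Finset.mem_coe] at h1 h2 h
        have hcc : c = c' := by
          rw [← val c ω h1.1 h1.2, ← val c' ω' h2.1 h2.2, h]
        subst hcc
        rw [conjSwap_injective b c h]
    rwa [Finset.card_product] at this
  calc _ ≤ (containing (insert p T)).card * (2 * k * D.card) := Nat.mul_le_mul_left _ hD2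
    _ = D.card * (containing (insert p T)).card * (2 * k) := by ring
    _ ≤ _ := Nat.mul_le_mul_right _ key

lemma containing_bound {N : ℕ} (k : ℕ) (T : Finset (Sym2 (Fin (3 * N)))) (hk : T.card ≤ k) :
    (containing T).card * (3 * N) ^ T.card ≤ Nat.card (Omega N) * (2 * k) ^ T.card := by
  classical
  induction T using Finset.induction_on with
  | empty => simp [containing]
  | insert p T hp ih =>
    rw [Finset.card_insert_of_notMem hp] at hk ⊢
    have h1 := containing_insert k T p hp hk
    have h2 := ih (by omega)
    calc (containing (insert p T)).card * (3 * N) ^ (T.card + 1)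
        = (containing (insert p T)).card * (3 * N) * (3 * N) ^ T.card := by ring
      _ ≤ (containing T).card * (2 * k) * (3 * N) ^ T.card := Nat.mul_le_mul_right _ h1
      _ = (containing T).card * (3 * N) ^ T.card * (2 * k) := by ring
      _ ≤ Nat.card (Omega N) * (2 * k) ^ T.card * (2 * k) := Nat.mul_le_mul_right _ h2
      _ = _ := by ring

lemma card_blk {N : ℕ} (u : Fin N) :
    (Finset.univ.filter fun a : Fin (3 * N) => blk a = u).card ≤ 3 := by
  calc _ ≤ (Finset.range 3).card := by
        apply Finset.card_le_card_of_injOn (fun a => a.val % 3)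
        · intro a _
          simp; omega
        · intro a ha b hb h
          simp only [Finset.coe_filter, Finset.mem_univ, true_and, Set.mem_ofPred_eq] at ha hb h
          have h3 : a.val / 3 = b.val / 3 := congrArg Fin.val (ha.trans hb.symm)
          apply Fin.ext
          omega
    _ = 3 := by simp

lemma card_pairs {N : ℕ} (q : Sym2 (Fin N)) [DecidableEq (Sym2 (Fin N))] :
    (Finset.univ.filter fun p : Sym2 (Fin (3 * N)) => Sym2.map blk p = q).card ≤ 9 := by
  classical
  induction q using Sym2.ind with
  | _ u v =>
  calc _ ≤ (((Finset.univ.filter fun a : Fin (3 * N) => blk a = u) ×ˢ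
        (Finset.univ.filter fun a : Fin (3 * N) => blk a = v)).image
          fun ab => s(ab.1, ab.2)).card := by
        apply Finset.card_le_card
        intro p hp
        induction p using Sym2.ind with
        | _ a b =>
        simp only [Finset.mem_filter, Finset.mem_univ, true_and, Sym2.map_mk] at hp
        simp only [Finset.mem_image, Finset.mem_product, Finset.mem_filter, Finset.mem_univ,
          true_and, Prod.exists]
        rcases Sym2.eq_iff.1 hp with h | h
        · exact ⟨a, b, h, rfl⟩
        · exact ⟨b, a, ⟨h.2, h.1⟩, Sym2.eq_swap⟩
    _ ≤ _ := Finset.card_image_le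
    _ = _ := Finset.card_product _ _
    _ ≤ 3 * 3 := Nat.mul_le_mul (card_blk u) (card_blk v)
    _ = 9 := by norm_num

lemma sum_copies_bound {V : Type*} [Fintype V] (H : SimpleGraph V) (N : ℕ) :
    (∑ ω : Omega N, copies H ω) * (3 * N) ^ Nat.card H.edgeSet ≤
      N ^ Nat.card V * 9 ^ Nat.card H.edgeSet *
        (Nat.card (Omega N) * (2 * Nat.card H.edgeSet) ^ Nat.card H.edgeSet) := by
  classical
  set k := Nat.card H.edgeSet with hk
  have hk' : Fintype.card H.edgeSet = k := Nat.card_eq_fintype_card.symm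
  let S : Finset ((V → Fin N) × (H.edgeSet → Sym2 (Fin (3 * N)))) :=
    Finset.univ.filter fun fg => Function.Injective fg.2 ∧
      ∀ e : H.edgeSet, Sym2.map blk (fg.2 e) = Sym2.map fg.1 e.val
  have hS : S.card ≤ N ^ Nat.card V * 9 ^ k := by
    calc S.card ≤ ((Finset.univ : Finset (V → Fin N)).sigma fun f =>
            Fintype.piFinset fun e : H.edgeSet =>
              Finset.univ.filter fun p : Sym2 (Fin (3 * N)) =>
                Sym2.map blk p = Sym2.map f e.val).card := by
          apply Finset.card_le_card_of_injOn (fun fg => ⟨fg.1, fg.2⟩)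
          · rintro ⟨f, g⟩ h
            simp only [S, Finset.coe_filter, Finset.mem_univ, true_and, Set.mem_ofPred_eq] at h
            simp only [Finset.mem_coe, Finset.mem_sigma, Finset.mem_univ, true_and,
              Fintype.mem_piFinset, Finset.mem_filter]
            exact h.2
          · rintro ⟨f, g⟩ _ ⟨f', g'⟩ _ h
            simpa using h
      _ = ∑ f : V → Fin N, _ := Finset.card_sigma _ _
      _ ≤ ∑ f : V → Fin N, 9 ^ k := by
          apply Finset.sum_le_sum
          intro f _
          rw [Fintype.card_piFinset, ← hk', ← Finset.card_univ]
          exact Finset.prod_le_pow_card _ _ _ (fun e _ => card_pairs _)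
      _ = _ := by simp
  have h1 : ∀ ω : Omega N, copies H ω ≤
      ∑ fg ∈ S, if ω ∈ containing (Finset.univ.image fg.2) then 1 else 0 := by
    intro ω
    rw [← Finset.card_filter, copies, Nat.card_eq_fintype_card, Fintype.card_subtype]
    apply Finset.card_le_card
    rintro ⟨f, g⟩ h
    simp only [Finset.mem_filter, Finset.mem_univ, true_and] at h
    simp only [S, containing, Finset.mem_filter, Finset.mem_univ, true_and, Finset.mem_image,
      forall_exists_index, forall_apply_eq_imp_iff]
    exact ⟨⟨h.2.1, fun e => (h.2.2 e).2⟩, fun e => (h.2.2 e).1⟩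
  have h2 : ∑ ω : Omega N, copies H ω ≤
      ∑ fg ∈ S, (containing (N := N) (Finset.univ.image fg.2)).card := by
    calc _ ≤ ∑ ω : Omega N, ∑ fg ∈ S,
            if ω ∈ containing (Finset.univ.image fg.2) then 1 else 0 :=
          Finset.sum_le_sum fun ω _ => h1 ω
      _ = _ := by
          rw [Finset.sum_comm]
          apply Finset.sum_congr rfl
          intro fg _
          simp
  calc _ ≤ (∑ fg ∈ S, (containing (N := N) (Finset.univ.image fg.2)).card) * (3 * N) ^ k :=
        Nat.mul_le_mul_right _ h2
    _ = ∑ fg ∈ S, (containing (N := N) (Finset.univ.image fg.2)).card * (3 * N) ^ k :=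
        Finset.sum_mul _ _ _
    _ ≤ ∑ fg ∈ S, Nat.card (Omega N) * (2 * k) ^ k := by
        apply Finset.sum_le_sum
        intro fg hfg
        have hinj : Function.Injective fg.2 := (Finset.mem_filter.1 hfg).2.1
        have hc : (Finset.univ.image fg.2).card = k := by
          rw [Finset.card_image_of_injective _ hinj, Finset.card_univ, hk']
        have := containing_bound k (Finset.univ.image fg.2) hc.le
        rwa [hc] at this
    _ = S.card * (Nat.card (Omega N) * (2 * k) ^ k) := by simp
    _ ≤ _ := Nat.mul_le_mul_right _ hS

/-- Theorem (Bollobás): if `H` is a fixed finite simple graph with nonempty vertex and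
edge sets and more edges than vertices, the expected number of copies of `H` in the
configuration-model multigraph is `O(1/N)`. -/
theorem expected_copies_of_dense_subgraph {V : Type*} [Fintype V] [Nonempty V]
    (H : SimpleGraph V) (hE : H.edgeSet.Nonempty)
    (hdense : Nat.card V < Nat.card H.edgeSet) :
    ∃ C : ℝ, 0 < C ∧ ∀ N : ℕ, Even N →
      (∑ ω : Omega N, (copies H ω : ℝ)) / (Nat.card (Omega N) : ℝ) ≤ C / N := by
  have hb := sum_copies_bound H
  set k := Nat.card H.edgeSet with hk
  have hk0 : 0 < k := by omega
  have hk0' : (0 : ℝ) < k := by exact_mod_cast hk0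
  refine ⟨9 ^ k * (2 * k) ^ k, by positivity, ?_⟩
  intro N _
  rcases Nat.eq_zero_or_pos N with rfl | hN
  · have h0 : ∀ ω : Omega 0, copies H ω = 0 := by
      intro ω
      rw [copies]
      have : IsEmpty (V → Fin 0) := inferInstance
      have : IsEmpty ((V → Fin 0) × (H.edgeSet → Sym2 (Fin (3 * 0)))) := inferInstance
      exact Nat.card_of_isEmpty
    simp [h0]
  have hNr : (0 : ℝ) < N := by exact_mod_cast hN
  rcases Nat.eq_zero_or_pos (Nat.card (Omega N)) with h0 | hpos
  · rw [h0]; simp; positivity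
  have hposr : (0 : ℝ) < Nat.card (Omega N) := by exact_mod_cast hpos
  rw [div_le_div_iff₀ hposr hNr]
  have hX : (∑ ω : Omega N, copies H ω) * N ≤ 9 ^ k * (2 * k) ^ k * Nat.card (Omega N) := by
    have hb := hb N
    have hp : N ^ Nat.card V * N ≤ (3 * N) ^ k := by
      calc N ^ Nat.card V * N = N ^ (Nat.card V + 1) := (pow_succ _ _).symm
        _ ≤ N ^ k := Nat.pow_le_pow_right hN hdense
        _ ≤ (3 * N) ^ k := Nat.pow_le_pow_left (by omega) _
    have hp0 : 0 < N ^ Nat.card V := by positivity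
    apply Nat.le_of_mul_le_mul_left _ hp0
    calc _ = (∑ ω : Omega N, copies H ω) * (N ^ Nat.card V * N) := by ring
      _ ≤ (∑ ω : Omega N, copies H ω) * (3 * N) ^ k := Nat.mul_le_mul_left _ hp
      _ ≤ _ := hb
      _ = _ := by ring
  exact_mod_cast hX
end

section
/- Let G_N denote the set of labelled cubic multigraphs on the vertex set Fin N, and let Ω_N be the set of perfect matchings of a 3N-element set, so |Ω_N| = (3N)!/(2^{3N/2}·(3N/2)!). Then |G_N| ∼ e²·|Ω_N|/6^N as N → ∞ through even values of N; that is, |G_N|·6^N/(e²·|Ω_N|) → 1. -/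
open Filter Real Topology
set_option linter.unusedSimpArgs false

/-- A cubic multigraph on `Fin N`: a symmetric multiplicity function, where `m u u`
counts loops at `u` (each contributing 2 to the degree) and `m u v` (for `u ≠ v`)
counts edges between `u` and `v`, such that every vertex has degree 3. -/
def IsCubic {N : ℕ} (m : Fin N → Fin N → ℕ) : Prop :=
  (∀ u v, m u v = m v u) ∧ ∀ u, 2 * m u u + ∑ v ∈ Finset.univ.erase u, m u v = 3


/-- Gaussian moments with variance `v`. -/
noncomputable def gmom (v : ℝ) : ℕ → ℝ
  | 0 => 1
  | 1 => 0
  | (n+2) => v * (n+1) * gmom v n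

noncomputable def gvar (i : Fin 3) : ℝ := 1 / ((i : ℕ) + 1)

lemma gmom_succ (v : ℝ) (n : ℕ) : gmom v (n+1) = v * (n * gmom v (n-1)) := by
  cases n with
  | zero => simp [gmom]
  | succ n => simp [gmom]; ring

abbrev PP := MvPolynomial (Fin 3) ℝ

/-- The Gaussian expectation functional. -/
noncomputable def EE : PP →ₗ[ℝ] ℝ :=
  (MvPolynomial.basisMonomials (Fin 3) ℝ).constr ℝ (fun s => ∏ i, gmom (gvar i) (s i))

lemma EE_monomial (s : Fin 3 →₀ ℕ) (a : ℝ) :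
    EE (MvPolynomial.monomial s a) = a * ∏ i, gmom (gvar i) (s i) := by
  have h : MvPolynomial.monomial s a = a • (MvPolynomial.basisMonomials (Fin 3) ℝ) s := by
    simp [MvPolynomial.smul_monomial]
  rw [h, map_smul, EE, Module.Basis.constr_basis, smul_eq_mul]

lemma EE_X (i : Fin 3) (F : PP) :
    EE (MvPolynomial.X i * F) = gvar i * EE (MvPolynomial.pderiv i F) := by
  induction F using MvPolynomial.induction_on' with
  | monomial s a =>
    rw [MvPolynomial.pderiv_monomial, MvPolynomial.X, MvPolynomial.monomial_mul, EE_monomial,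
      EE_monomial]
    rw [← Finset.mul_prod_erase _ _ (Finset.mem_univ i),
      ← Finset.mul_prod_erase _ _ (Finset.mem_univ i)]
    have : ∀ j ∈ Finset.univ.erase i, gmom (gvar j) ((Finsupp.single i 1 + s : Fin 3 →₀ ℕ) j)
        = gmom (gvar j) ((s - Finsupp.single i 1 : Fin 3 →₀ ℕ) j) := by
      intro j hj
      have : i ≠ j := (Finset.ne_of_mem_erase hj).symm
      simp [Finsupp.single_apply, this]
    rw [Finset.prod_congr rfl this]
    have h2 : (Finsupp.single i 1 + s : Fin 3 →₀ ℕ) i = s i + 1 := by simp [add_comm]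
    have h3 : (s - Finsupp.single i 1 : Fin 3 →₀ ℕ) i = s i - 1 := by simp
    rw [h2, h3, gmom_succ]
    ring
  | add p q hp hq => simp only [mul_add, map_add, hp, hq]

noncomputable def ff : ℕ → PP
  | 0 => 1
  | 1 => MvPolynomial.X 0
  | 2 => MvPolynomial.C (1/2) * MvPolynomial.X 0 ^ 2 + MvPolynomial.X 1 + MvPolynomial.C (1/2)
  | 3 => MvPolynomial.C (1/6) * MvPolynomial.X 0 ^ 3 + MvPolynomial.X 0 * MvPolynomial.X 1
      + MvPolynomial.C (1/2) * MvPolynomial.X 0 + MvPolynomial.X 2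
  | _ => 0

/-- shift operator -/
noncomputable def TT : PP →ₐ[ℝ] Polynomial PP :=
  MvPolynomial.aeval (fun i : Fin 3 =>
    Polynomial.C (MvPolynomial.X i) +
      Polynomial.C (MvPolynomial.C (gvar i)) * Polynomial.X ^ ((i : ℕ) + 1))

lemma TT_X (i : Fin 3) : TT (MvPolynomial.X i) = Polynomial.C (MvPolynomial.X i) +
      Polynomial.C (MvPolynomial.C (gvar i)) * Polynomial.X ^ ((i : ℕ) + 1) := by
  simp [TT]

lemma TT_C (a : ℝ) : TT (MvPolynomial.C a) = Polynomial.C (MvPolynomial.C a) := by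
  simp [TT]

lemma half_eq : (MvPolynomial.C (1/2) : PP) * 2 = 1 := by
  rw [← map_ofNat (MvPolynomial.C (σ := Fin 3) (R := ℝ)) 2, ← map_mul]; norm_num

lemma TT_ff (d : ℕ) (hd : d ≤ 3) :
    TT (ff d) = ∑ e ∈ Finset.range (d+1), Polynomial.X ^ e * Polynomial.C (ff (d - e)) := by
  have g0 : gvar 0 = 1 := by norm_num [gvar]
  have g1 : gvar 1 = 1/2 := by norm_num [gvar]
  have g2 : gvar 2 = 1/3 := by norm_num [gvar]
  have q2 : (Polynomial.C (MvPolynomial.C (1/2)) : Polynomial PP)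
      = Polynomial.C (MvPolynomial.C (1/6)) * 3 := by
    rw [← map_ofNat (Polynomial.C (R := PP)) 3, ← map_mul,
      ← map_ofNat (MvPolynomial.C (σ := Fin 3) (R := ℝ)) 3, ← map_mul]; norm_num
  have q3 : (Polynomial.C (MvPolynomial.C (1/3)) : Polynomial PP)
      = Polynomial.C (MvPolynomial.C (1/6)) * 2 := by
    rw [← map_ofNat (Polynomial.C (R := PP)) 2, ← map_mul,
      ← map_ofNat (MvPolynomial.C (σ := Fin 3) (R := ℝ)) 2, ← map_mul]; norm_num
  have q6 : (Polynomial.C (MvPolynomial.C (1/6)) : Polynomial PP) * 6 = 1 := by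
    rw [← map_ofNat (Polynomial.C (R := PP)) 6, ← map_mul,
      ← map_ofNat (MvPolynomial.C (σ := Fin 3) (R := ℝ)) 6, ← map_mul]; norm_num
  interval_cases d <;>
    simp only [ff, map_add, map_mul, map_pow, TT_X, TT_C, Finset.sum_range_succ, g0, g1, g2,
      Finset.sum_range_zero, map_one, Fin.val_zero, Fin.val_one, Fin.val_two, q2, q3,
      Nat.sub_zero, Nat.sub_self, Nat.reduceSub]
  · simp
  · ring
  · linear_combination (Polynomial.X^2 + Polynomial.X * Polynomial.C (MvPolynomial.X 0)) * q6
  · linear_combination (Polynomial.X^3 + Polynomial.X^2 * Polynomial.C (MvPolynomial.X 0)) * q6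

noncomputable def P1 (F : PP) : PP := MvPolynomial.pderiv 0 F
noncomputable def P2 (F : PP) : PP :=
  MvPolynomial.C (1/2) * MvPolynomial.pderiv 0 (MvPolynomial.pderiv 0 F)
    + MvPolynomial.C (1/2) * MvPolynomial.pderiv 1 F
noncomputable def P3 (F : PP) : PP :=
  MvPolynomial.C (1/6) *
    MvPolynomial.pderiv 0 (MvPolynomial.pderiv 0 (MvPolynomial.pderiv 0 F))
    + MvPolynomial.C (1/2) * MvPolynomial.pderiv 0 (MvPolynomial.pderiv 1 F)
    + MvPolynomial.C (1/3) * MvPolynomial.pderiv 2 F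

lemma pd01 (F : PP) : MvPolynomial.pderiv 1 (MvPolynomial.pderiv 0 F) =
    MvPolynomial.pderiv 0 (MvPolynomial.pderiv 1 F) := by
  induction F using MvPolynomial.induction_on with
  | C a => simp
  | add p q hp hq => simp [hp, hq]
  | mul_X p i hp => 
    fin_cases i <;> simp [Derivation.leibniz, MvPolynomial.pderiv_X, hp, add_comm]

lemma TT_coeff (F : PP) : (TT F).coeff 0 = F ∧ (TT F).coeff 1 = P1 F ∧
    (TT F).coeff 2 = P2 F ∧ (TT F).coeff 3 = P3 F := by
  have g0 : gvar 0 = 1 := by norm_num [gvar]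
  have g1 : gvar 1 = 1/2 := by norm_num [gvar]
  have g2 : gvar 2 = 1/3 := by norm_num [gvar]
  have q2 : (MvPolynomial.C (1/2) : PP) = MvPolynomial.C (1/6) * 3 := by
    rw [← map_ofNat (MvPolynomial.C (σ := Fin 3) (R := ℝ)) 3, ← map_mul]; norm_num
  have q3 : (MvPolynomial.C (1/3) : PP) = MvPolynomial.C (1/6) * 2 := by
    rw [← map_ofNat (MvPolynomial.C (σ := Fin 3) (R := ℝ)) 2, ← map_mul]; norm_num
  have q6 : (MvPolynomial.C (1/6) : PP) * 6 = 1 := by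
    rw [← map_ofNat (MvPolynomial.C (σ := Fin 3) (R := ℝ)) 6, ← map_mul]; norm_num
  induction F using MvPolynomial.induction_on with
  | C a => simp [TT_C, P1, P2, P3, Polynomial.coeff_C]
  | add p q hp hq =>
    obtain ⟨a0, a1, a2, a3⟩ := hp
    obtain ⟨b0, b1, b2, b3⟩ := hq
    simp only [map_add, Polynomial.coeff_add, a0, a1, a2, a3, b0, b1, b2, b3]
    refine ⟨trivial, ?_, ?_, ?_⟩ <;> simp only [P1, P2, P3, map_add] <;> ring
  | mul_X p i hp =>
    obtain ⟨a0, a1, a2, a3⟩ := hp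
    have key : ∀ n, (TT (p * MvPolynomial.X i)).coeff n = (TT p).coeff n * MvPolynomial.X i
        + MvPolynomial.C (gvar i) *
          (if (i : ℕ) + 1 ≤ n then (TT p).coeff (n - ((i : ℕ)+1)) else 0) := by
      intro n
      rw [map_mul, TT_X, mul_add, Polynomial.coeff_add, Polynomial.coeff_mul_C,
        mul_left_comm, Polynomial.coeff_C_mul, Polynomial.coeff_mul_X_pow']
    simp only [key, a0, a1, a2, a3]
    fin_cases i
    · simp [a0, a1, a2, a3, g0, P1, P2, P3, Derivation.leibniz, MvPolynomial.pderiv_X, pd01]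
      simp only [← one_div, q2, q3]
      refine ⟨by ring, ?_, ?_⟩
      · linear_combination (-(MvPolynomial.pderiv 0 p)) * q6
      · ring
    · simp [a0, a1, a2, a3, g1, P1, P2, P3, Derivation.leibniz, MvPolynomial.pderiv_X, pd01]
      simp only [← one_div, q2, q3]
      refine ⟨by ring, ?_, ?_⟩
      · ring
      · ring
    · simp [a0, a1, a2, a3, g2, P1, P2, P3, Derivation.leibniz, MvPolynomial.pderiv_X, pd01]
      simp only [← one_div, q2, q3]
      refine ⟨by ring, ?_, ?_⟩
      · ring
      · ring

lemma EE_C (a : ℝ) (F : PP) : EE (MvPolynomial.C a * F) = a * EE F := by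
  rw [← MvPolynomial.smul_eq_C_mul, map_smul, smul_eq_mul]

lemma EE_ff (d : ℕ) (hd : d ≤ 3) (F : PP) :
    EE (ff d * F) = ∑ l ∈ Finset.range 2,
      if 2 * l ≤ d then EE ((TT F).coeff (d - 2 * l)) else 0 := by
  have g0 : gvar 0 = 1 := by norm_num [gvar]
  have g1 : gvar 1 = 1/2 := by norm_num [gvar]
  have g2 : gvar 2 = 1/3 := by norm_num [gvar]
  obtain ⟨a0, a1, a2, a3⟩ := TT_coeff F
  have X0 : ∀ F, EE (MvPolynomial.X 0 * F) = EE (MvPolynomial.pderiv 0 F) := by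
    intro F; rw [EE_X, g0, one_mul]
  have X1 : ∀ F, EE (MvPolynomial.X 1 * F) = 1/2 * EE (MvPolynomial.pderiv 1 F) := by
    intro F; rw [EE_X, g1]
  have X2 : ∀ F, EE (MvPolynomial.X 2 * F) = 1/3 * EE (MvPolynomial.pderiv 2 F) := by
    intro F; rw [EE_X, g2]
  interval_cases d
  · simp [ff, Finset.sum_range_succ, a0]
  · simp [ff, Finset.sum_range_succ, a1, P1, X0]
  · simp only [ff, Finset.sum_range_succ, a2, a0, P2, Finset.sum_range_zero, add_mul, mul_assoc,
      map_add, EE_C, pow_two, X0, X1]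
    simp [Derivation.leibniz, a0, X0, EE_C, ← one_div, a2, P2]
    ring
  · simp only [ff, Finset.sum_range_succ, Finset.sum_range_zero, add_mul, mul_assoc,
      map_add, EE_C, pow_succ, pow_zero, one_mul, X0, X1, X2]
    simp [Derivation.leibniz, a1, X0, X1, EE_C, ← one_div, a3, P3, P1, pd01]
    ring

/-- symmetric matrices with given degrees -/
def IsDeg {N : ℕ} (d : Fin N → ℕ) (m : Fin N → Fin N → ℕ) : Prop :=
  (∀ u v, m u v = m v u) ∧ ∀ u, m u u + ∑ v, m u v = d u

lemma IsDeg_finite {N : ℕ} (d : Fin N → ℕ) : {m | IsDeg d m}.Finite := by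
  apply (Set.finite_Icc (0 : Fin N → Fin N → ℕ) (fun u _ => d u)).subset
  intro m hm
  refine ⟨fun u v => Nat.zero_le _, fun u v => ?_⟩
  have h1 := hm.2 u
  have h2 : m u v ≤ ∑ v, m u v := Finset.single_le_sum (fun _ _ => Nat.zero_le _) (Finset.mem_univ v)
  show m u v ≤ d u
  omega

noncomputable def SS {N : ℕ} (d : Fin N → ℕ) : Finset (Fin N → Fin N → ℕ) :=
  (IsDeg_finite d).toFinset

lemma mem_SS {N : ℕ} (d : Fin N → ℕ) (m) : m ∈ SS d ↔ IsDeg d m := by simp [SS]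

lemma fiber_card {N : ℕ} (d : Fin (N+1) → ℕ) (l : ℕ) (e : Fin N → ℕ)
    (he : ∀ v, e v ≤ d v.succ) (h : 2 * l + ∑ v, e v = d 0) :
    ((SS d).filter (fun m => ((m 0 0, fun v : Fin N => m 0 v.succ) : ℕ × (Fin N → ℕ)) = (l, e))).card
      = (SS (fun v => d v.succ - e v)).card := by
  apply Finset.card_nbij' (fun (m : Fin (N+1) → Fin (N+1) → ℕ) (u v : Fin N) => m u.succ v.succ)
    (fun (m' : Fin N → Fin N → ℕ) => (Fin.cons (Fin.cons l e : Fin (N+1) → ℕ)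
      (fun u => (Fin.cons (e u) (m' u) : Fin (N+1) → ℕ)) : Fin (N+1) → Fin (N+1) → ℕ))
  · intro m hm
    simp only [Finset.coe_filter, Set.mem_ofPred_eq, mem_SS, Prod.mk.injEq] at hm
    obtain ⟨⟨hs, hd⟩, h0, h1⟩ := hm
    simp only [Finset.mem_coe, mem_SS]
    refine ⟨fun u v => hs _ _, fun u => ?_⟩
    have := hd u.succ
    rw [Fin.sum_univ_succ, hs u.succ 0] at this
    have h2 := congrFun h1 u
    have h3 := he u
    show m u.succ u.succ + ∑ v : Fin N, m u.succ v.succ = d u.succ - e u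
    omega
  · intro m hm
    simp only [Finset.mem_coe, mem_SS] at hm
    obtain ⟨hs, hd⟩ := hm
    simp only [Finset.coe_filter, Set.mem_ofPred_eq, mem_SS, Prod.mk.injEq]
    refine ⟨⟨?_, ?_⟩, ?_, ?_⟩
    · intro u v
      refine Fin.cases ?_ (fun u => ?_) u <;> refine Fin.cases ?_ (fun v => ?_) v <;> simp [hs]
    · intro u
      refine Fin.cases ?_ (fun u => ?_) u
      · simp [Fin.sum_univ_succ]; omega
      · have := hd u
        have h3 := he u
        simp only at this
        simp [Fin.sum_univ_succ]; omega
    · simp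
    · simp
  · intro m hm
    simp only [Finset.coe_filter, Set.mem_ofPred_eq, mem_SS, Prod.mk.injEq] at hm
    obtain ⟨⟨hs, hd⟩, h0, h1⟩ := hm
    funext u v
    refine Fin.cases ?_ (fun u => ?_) u <;> refine Fin.cases ?_ (fun v => ?_) v
    · simp [h0]
    · simp [← h1]
    · simp [← h1, hs]
    · simp
  · intro m hm
    funext u v
    simp

lemma SS_card_succ {N : ℕ} (d : Fin (N+1) → ℕ) (hd0 : d 0 ≤ 3) :
    (SS d).card = ∑ l ∈ Finset.range 2,
      ∑ e ∈ Fintype.piFinset (fun v : Fin N => Finset.range (d v.succ + 1)),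
        if 2 * l + ∑ v, e v = d 0 then (SS (fun v => d v.succ - e v)).card else 0 := by
  rw [← Finset.sum_product']
  rw [Finset.card_eq_sum_card_fiberwise
    (f := fun m => ((m 0 0, fun v : Fin N => m 0 v.succ) : ℕ × (Fin N → ℕ)))
    (t := Finset.range 2 ×ˢ Fintype.piFinset (fun v : Fin N => Finset.range (d v.succ + 1)))]
  · apply Finset.sum_congr rfl
    rintro ⟨l, e⟩ hle
    simp only [Finset.mem_product, Fintype.mem_piFinset, Finset.mem_range] at hle
    simp only
    split_ifs with h
    · exact fiber_card d l e (fun v => by have := hle.2 v; omega) h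
    · rw [Finset.card_eq_zero, Finset.filter_eq_empty_iff]
      intro m hm heq
      rw [mem_SS] at hm
      simp only [Prod.mk.injEq] at heq
      have := hm.2 0
      rw [Fin.sum_univ_succ, heq.1, ← add_assoc, ← two_mul] at this
      rw [← heq.2] at h
      exact h this
  · intro m hm
    rw [Finset.mem_coe, mem_SS] at hm
    simp only [Finset.coe_product, Set.mem_prod, Finset.mem_coe, Fintype.mem_piFinset,
      Finset.mem_range]
    constructor
    · have := hm.2 0
      rw [Fin.sum_univ_succ] at this
      omega
    · intro v
      have h1 := hm.2 v.succ
      have h2 : m v.succ 0 ≤ ∑ w, m v.succ w :=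
        Finset.single_le_sum (fun _ _ => Nat.zero_le _) (Finset.mem_univ 0)
      rw [hm.1 0 v.succ]
      omega

lemma SS_card_EE : ∀ (N : ℕ) (d : Fin N → ℕ), (∀ v, d v ≤ 3) →
    ((SS d).card : ℝ) = EE (∏ v, ff (d v)) := by
  intro N
  induction N with
  | zero =>
    intro d _
    have h1 : EE 1 = 1 := by
      have := EE_monomial 0 1
      simpa [gmom] using this
    have : SS d = {fun u => u.elim0} := by
      ext m
      rw [mem_SS, Finset.mem_singleton]
      constructor
      · intro _; exact Subsingleton.elim _ _
      · intro _; exact ⟨fun u => u.elim0, fun u => u.elim0⟩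
    rw [this]
    simp [h1]
  | succ N ih =>
    intro d hd
    rw [SS_card_succ d (hd 0), Fin.prod_univ_succ, EE_ff _ (hd 0)]
    push_cast
    apply Finset.sum_congr rfl
    intro l _
    have hT : TT (∏ v : Fin N, ff (d v.succ)) =
        ∑ e ∈ Fintype.piFinset (fun v : Fin N => Finset.range (d v.succ + 1)),
          Polynomial.C (∏ v, ff (d v.succ - e v)) * Polynomial.X ^ (∑ v, e v) := by
      rw [map_prod, Finset.prod_congr rfl (fun v _ => TT_ff _ (hd v.succ)), Finset.prod_univ_sum]
      apply Finset.sum_congr rfl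
      intro e _
      rw [Finset.prod_mul_distrib, Finset.prod_pow_eq_pow_sum, map_prod, mul_comm]
    rw [hT]
    split_ifs with h
    · rw [Polynomial.finsetSum_coeff, map_sum]
      apply Finset.sum_congr rfl
      intro e _
      rw [Polynomial.coeff_C_mul_X_pow]
      by_cases h' : 2 * l + ∑ v, e v = d 0
      · rw [if_pos h', if_pos (by omega), ih]
        intro v
        have := hd v.succ
        omega
      · rw [if_neg h', if_neg (by omega), map_zero]
    · apply Finset.sum_eq_zero
      intro e _
      rw [if_neg (by omega)]

lemma isCubic_iff {N : ℕ} (m : Fin N → Fin N → ℕ) : IsCubic m ↔ IsDeg (fun _ => 3) m := by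
  unfold IsCubic IsDeg
  apply and_congr Iff.rfl
  apply forall_congr'
  intro u
  rw [← Finset.add_sum_erase _ _ (Finset.mem_univ u), two_mul, add_assoc]

lemma cubic_card (N : ℕ) :
    (Nat.card {m : Fin N → Fin N → ℕ // IsCubic m} : ℝ) = EE (ff 3 ^ N) := by
  have h := SS_card_EE N (fun _ => 3) (fun _ => le_rfl)
  rw [Finset.prod_const, Finset.card_univ, Fintype.card_fin] at h
  rw [← h]
  congr 1
  exact Nat.subtype_card _ (fun m => by rw [mem_SS, isCubic_iff])

lemma omega_card (N : ℕ) (hN : Even N) : Nat.card (Omega N) =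
        Nat.factorial (3 * N) / (2 ^ (3 * N / 2) * Nat.factorial (3 * N / 2)) := by
  have hs : 3 * N / 2 * 2 = 3 * N := by
    obtain ⟨k, rfl⟩ := hN; omega
  have key : ∀ ω : Equiv.Perm (Fin (3 * N)), (∀ a, ω (ω a) = a ∧ ω a ≠ a) ↔
      ω.cycleType = Multiset.replicate (3 * N / 2) 2 := by
    intro ω
    constructor
    · intro h
      have h2 : ω ^ 2 = 1 := by
        ext a; simp [pow_two, (h a).1]
      have h3 : ω.support = Finset.univ := by
        ext a; simp [(h a).2]
      have : Fact (Nat.Prime 2) := ⟨Nat.prime_two⟩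
      have := Equiv.Perm.cycleType_of_pow_prime_eq_one h2
      have h4 := ω.sum_cycleType
      rw [h3, Finset.card_univ, Fintype.card_fin] at h4
      rw [this] at h4 ⊢
      rw [Multiset.sum_replicate, smul_eq_mul] at h4
      congr 1
      omega
    · intro h a
      have h4 := ω.sum_cycleType
      rw [h, Multiset.sum_replicate, smul_eq_mul, hs] at h4
      have h3 : ω.support = Finset.univ := by
        apply Finset.eq_univ_of_card
        rw [← h4, Fintype.card_fin]
      have h5 : orderOf ω ∣ 2 := by
        rw [← Equiv.Perm.lcm_cycleType, h]
        apply Multiset.lcm_dvd.2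
        intro b hb
        rw [Multiset.eq_of_mem_replicate hb]
      have h6 := orderOf_dvd_iff_pow_eq_one.1 h5
      constructor
      · have := congrArg (fun f : Equiv.Perm (Fin (3*N)) => f a) h6
        simpa [pow_two] using this
      · have : a ∈ ω.support := by rw [h3]; exact Finset.mem_univ a
        exact Equiv.Perm.mem_support.1 this
  have h1 : Nat.card (Omega N) = (Finset.univ.filter (fun ω : Equiv.Perm (Fin (3 * N)) =>
      ω.cycleType = Multiset.replicate (3 * N / 2) 2)).card := by
    unfold Omega
    rw [Nat.card_eq_fintype_card, Fintype.card_subtype]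
    simp only [key]
  rw [h1, Equiv.Perm.card_of_cycleType, if_pos]
  · rw [Multiset.sum_replicate, smul_eq_mul, hs, Fintype.card_fin, Nat.sub_self,
      Multiset.prod_replicate]
    congr 1
    rcases Nat.eq_zero_or_pos (3 * N / 2) with h0 | h0
    · simp [h0]
    · rw [Multiset.toFinset_replicate, if_neg h0.ne', Finset.prod_singleton,
        Multiset.count_replicate_self]
      simp
  · constructor
    · rw [Multiset.sum_replicate, smul_eq_mul, hs, Fintype.card_fin]
    · intro a ha
      rw [Multiset.eq_of_mem_replicate ha]

lemma gmom_even (v : ℝ) (M : ℕ) :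
    gmom v (2 * M) = v ^ M * (2 * M).factorial / (2 ^ M * M.factorial) := by
  induction M with
  | zero => simp [gmom]
  | succ M ih =>
    rw [show 2 * (M + 1) = 2 * M + 2 by ring, gmom, ih, Nat.factorial_succ, Nat.factorial_succ,
      Nat.factorial_succ M]
    push_cast
    field_simp
    ring

lemma gmom_odd (v : ℝ) (M : ℕ) : gmom v (2 * M + 1) = 0 := by
  induction M with
  | zero => simp [gmom]
  | succ M ih => rw [show 2 * (M+1) + 1 = (2 * M + 1) + 2 by ring, gmom, ih, mul_zero]

lemma two_pow_dvd (M : ℕ) : 2 ^ M * M.factorial ∣ (2 * M).factorial := by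
  induction M with
  | zero => simp
  | succ M ih =>
    obtain ⟨c, hc⟩ := ih
    refine ⟨(2 * M + 1) * c, ?_⟩
    rw [show 2 * (M + 1) = 2 * M + 1 + 1 by ring, Nat.factorial_succ, Nat.factorial_succ,
      Nat.factorial_succ M, hc]
    ring

lemma omega_card_real (n : ℕ) : (Nat.card (Omega (2 * n)) : ℝ) = gmom 1 (6 * n) := by
  rw [omega_card _ (even_two_mul n), show 3 * (2 * n) = 2 * (3 * n) by ring,
    Nat.mul_div_cancel_left _ two_pos, show 6 * n = 2 * (3 * n) by ring, gmom_even, one_pow, one_mul]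
  rw [Nat.cast_div]
  · push_cast; rfl
  · exact two_pow_dvd _
  · positivity

lemma gmom_nonneg {v : ℝ} (hv : 0 ≤ v) (n : ℕ) : 0 ≤ gmom v n := by
  obtain ⟨k, hk | hk⟩ := Nat.even_or_odd' n
  · rw [hk, gmom_even]; positivity
  · rw [hk, gmom_odd]

lemma gmom_pos (M : ℕ) : 0 < gmom 1 (2 * M) := by
  rw [gmom_even]; positivity

lemma gmom_hasSum (v c : ℝ) :
    HasSum (fun n : ℕ => c ^ n * gmom v n / n.factorial) (Real.exp (c ^ 2 * v / 2)) := by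
  have hinj : Function.Injective (fun q : ℕ => 2 * q) := fun a b h => by
    have h' : 2 * a = 2 * b := h
    omega
  rw [← hinj.hasSum_iff]
  · have h := NormedSpace.expSeries_div_hasSum_exp (c ^ 2 * v / 2)
    rw [← Real.exp_eq_exp_ℝ] at h
    have hfun : ((fun n : ℕ => c ^ n * gmom v n / n.factorial) ∘ fun q : ℕ => 2 * q) =
        fun n : ℕ => (c ^ 2 * v / 2) ^ n / n.factorial := ?_
    · rw [hfun]; exact h
    funext q
    rw [Function.comp_apply, gmom_even]
    have : ((2 * q).factorial : ℝ) ≠ 0 := by positivity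
    field_simp
    rw [div_pow, mul_pow, ← pow_mul]
    field_simp
  · intro n hn
    obtain ⟨k, hk | hk⟩ := Nat.even_or_odd' n
    · exact absurd ⟨k, hk.symm⟩ hn
    · rw [hk, gmom_odd]; simp

lemma gmom_ratio (M j : ℕ) (hj : j ≤ M) :
    gmom 1 (2 * M) = gmom 1 (2 * (M - j)) * ∏ l ∈ Finset.range j, (2 * (M : ℝ) - 2 * l - 1) := by
  induction j with
  | zero => simp
  | succ j ih =>
    rw [ih (by omega), Finset.prod_range_succ]
    obtain ⟨k, rfl⟩ : ∃ k, M = j + 1 + k := ⟨M - (j+1), by omega⟩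
    rw [show j + 1 + k - j = k + 1 by omega, show j + 1 + k - (j + 1) = k by omega,
      show 2 * (k + 1) = 2 * k + 2 by ring, gmom]
    push_cast
    ring

lemma desc_lower (M j : ℕ) (hj : j ≤ M) : M ^ j * j.factorial ≤ M.descFactorial j * j ^ j := by
  rw [← Nat.descFactorial_self j, Nat.descFactorial_eq_prod_range, Nat.descFactorial_eq_prod_range]
  have h1 : M ^ j = ∏ _l ∈ Finset.range j, M := by simp
  have h2 : j ^ j = ∏ _l ∈ Finset.range j, j := by simp
  rw [h1, h2, ← Finset.prod_mul_distrib, ← Finset.prod_mul_distrib]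
  apply Finset.prod_le_prod' 
  intro l hl
  rw [Finset.mem_range] at hl
  obtain ⟨a, rfl⟩ : ∃ a, j = l + a := ⟨j - l, by omega⟩
  obtain ⟨b, rfl⟩ : ∃ b, M = l + a + b := ⟨M - (l + a), by omega⟩
  rw [show l + a - l = a by omega, show l + a + b - l = a + b by omega]
  nlinarith [Nat.zero_le (l * b)]

lemma gmom_bound (n j : ℕ) (hj : j ≤ 3 * n) :
    gmom 1 (2 * (3 * n - j)) * (n : ℝ) ^ j ≤ gmom 1 (2 * (3 * n)) := by
  rw [gmom_ratio _ _ hj]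
  apply mul_le_mul_of_nonneg_left _ (gmom_nonneg zero_le_one _)
  have h1 : ((3 * n).descFactorial j : ℝ) ≤
      ∏ l ∈ Finset.range j, (2 * ((3 * n : ℕ) : ℝ) - 2 * l - 1) := by
    rw [Nat.descFactorial_eq_prod_range, Nat.cast_prod]
    apply Finset.prod_le_prod
    · intro l _; positivity
    · intro l hl
      rw [Finset.mem_range] at hl
      rw [Nat.cast_sub (by omega)]
      have : ((l + 1 : ℕ) : ℝ) ≤ ((3 * n : ℕ) : ℝ) := by exact_mod_cast (by omega)
      push_cast at *
      linarith
  refine le_trans ?_ h1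
  have h2 : (((3 * n) ^ j * j.factorial : ℕ) : ℝ) ≤ ((3 * n).descFactorial j * j ^ j : ℕ) := by
    exact_mod_cast desc_lower _ _ hj
  push_cast at h2
  have h3 : (j : ℝ) ^ j / j.factorial ≤ 3 ^ j := by
    calc (j : ℝ) ^ j / j.factorial ≤ Real.exp j := Real.pow_div_factorial_le_exp _ (by positivity) _
      _ = Real.exp 1 ^ j := by rw [← Real.exp_nat_mul]; simp
      _ ≤ 3 ^ j := pow_le_pow_left₀ (Real.exp_pos _).le Real.exp_one_lt_three.le _
  rw [div_le_iff₀ (by positivity)] at h3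
  have h4 : (0 : ℝ) < 3 ^ j * j.factorial := by positivity
  have h5 : ((3 * n).descFactorial j : ℝ) * j ^ j ≤ (3 * n).descFactorial j * (3 ^ j * j.factorial) :=
    mul_le_mul_of_nonneg_left h3 (by positivity)
  rw [mul_pow] at h2
  nlinarith

/-- The terms of the expansion. -/
noncomputable def tm (N s p i : ℕ) : ℝ :=
  (N.choose s : ℝ) * ((N - s).choose p) * ((N - s - p).choose i) * 3 ^ i * 6 ^ p * 6 ^ s
    * gmom 1 (3 * (N - s - p - i) + i + p) * gmom (1/2) p * gmom (1/3) s

lemma EE_mon (c : ℝ) (a b d : ℕ) :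
    EE (MvPolynomial.C c * (MvPolynomial.X 0 ^ a * MvPolynomial.X 1 ^ b * MvPolynomial.X 2 ^ d))
      = c * (gmom 1 a * gmom (1/2) b * gmom (1/3) d) := by
  have g0 : gvar 0 = 1 := by norm_num [gvar]
  have g1 : gvar 1 = 1/2 := by norm_num [gvar]
  have g2 : gvar 2 = 1/3 := by norm_num [gvar]
  rw [EE_C, MvPolynomial.X_pow_eq_monomial, MvPolynomial.X_pow_eq_monomial,
    MvPolynomial.X_pow_eq_monomial, MvPolynomial.monomial_mul, MvPolynomial.monomial_mul,
    EE_monomial, Fin.prod_univ_three, g0, g1, g2]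
  simp [Finsupp.single_apply]

lemma add_pow_ext {R : Type*} [CommRing R] (x y : R) (n K : ℕ) (h : n ≤ K) :
    (x + y) ^ n = ∑ m ∈ Finset.range (K + 1), x ^ m * y ^ (n - m) * (n.choose m : R) := by
  rw [add_pow]
  apply Finset.sum_subset
  · intro a; simp only [Finset.mem_range]; omega
  · intro m _ hm
    rw [Finset.mem_range, not_lt] at hm
    rw [Nat.choose_eq_zero_of_lt (by omega)]; simp

lemma EE_expand (N : ℕ) : 6 ^ N * EE (ff 3 ^ N) = ∑ s ∈ Finset.range (N+1),
    ∑ p ∈ Finset.range (N+1), ∑ i ∈ Finset.range (N+1), tm N s p i := by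
  have h6 : (MvPolynomial.C 6 * ff 3 : PP) = MvPolynomial.C 6 * MvPolynomial.X 2 +
      (MvPolynomial.C 6 * (MvPolynomial.X 0 * MvPolynomial.X 1) +
      (MvPolynomial.C 3 * MvPolynomial.X 0 + MvPolynomial.X 0 ^ 3)) := by
    have e1 : (MvPolynomial.C 6 * MvPolynomial.C (1/6) : PP) = 1 := by rw [← map_mul]; norm_num
    have e2 : (MvPolynomial.C 6 * MvPolynomial.C (1/2) : PP) = MvPolynomial.C 3 := by
      rw [← map_mul]; norm_num
    simp only [ff]
    linear_combination MvPolynomial.X 0 ^ 3 * e1 + MvPolynomial.X 0 * e2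
  rw [← EE_C, map_pow, ← mul_pow, h6, add_pow_ext _ _ N N le_rfl, map_sum]
  apply Finset.sum_congr rfl
  intro s _
  rw [add_pow_ext _ _ (N - s) N (by omega), Finset.mul_sum, Finset.sum_mul, map_sum]
  apply Finset.sum_congr rfl
  intro p _
  rw [add_pow_ext _ _ (N - s - p) N (by omega)]
  simp only [Finset.sum_mul, Finset.mul_sum]
  rw [map_sum]
  apply Finset.sum_congr rfl
  intro i _
  have := EE_mon ((N.choose s : ℝ) * ((N - s).choose p) * ((N - s - p).choose i) * 3 ^ i * 6 ^ p
    * 6 ^ s) (3 * (N - s - p - i) + i + p) p s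
  rw [tm, mul_assoc _ (gmom (1/2) p), mul_assoc _ (gmom 1 _), ← mul_assoc (gmom 1 _), ← this]
  congr 1
  simp only [map_mul, map_pow, map_natCast]
  ring

lemma choose_prod (N s p i : ℕ) :
    (N.choose s : ℝ) * ((N - s).choose p) * ((N - s - p).choose i) =
      N.descFactorial (s + p + i) / (s.factorial * p.factorial * i.factorial) := by
  rw [eq_div_iff (by positivity)]
  have h1 := Nat.descFactorial_mul_descFactorial (n := N) (k := s) (m := s + p) (by omega)
  have h2 := Nat.descFactorial_mul_descFactorial (n := N) (k := s + p) (m := s + p + i) (by omega)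
  rw [show s + p - s = p by omega] at h1
  rw [show s + p + i - (s + p) = i by omega, ← h1, Nat.sub_add_eq] at h2
  rw [← h2]
  simp only [Nat.descFactorial_eq_factorial_mul_choose]
  push_cast
  ring

lemma tm_zero (N s p i : ℕ) (h : N < s + p + i) : tm N s p i = 0 := by
  rw [tm, choose_prod, Nat.descFactorial_eq_zero_iff_lt.2 h]; simp

lemma tm_nonneg (N s p i : ℕ) : 0 ≤ tm N s p i := by
  have h1 := gmom_nonneg zero_le_one (3 * (N - s - p - i) + i + p)
  have h2 := gmom_nonneg (v := 1/2) (by norm_num) p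
  have h3 := gmom_nonneg (v := 1/3) (by norm_num) s
  unfold tm
  positivity

lemma tm_odd (N r p i : ℕ) : tm N (2 * r + 1) p i = 0 := by
  rw [tm, gmom_odd, mul_zero]

noncomputable def bnd (x : ℕ × ℕ × ℕ) : ℝ :=
  (12 ^ x.1 * gmom (1/3) x.1 / x.1.factorial) *
    ((12 ^ x.2.1 * gmom (1/2) x.2.1 / x.2.1.factorial) * (6 ^ x.2.2 / x.2.2.factorial))

lemma bnd_nonneg (x) : 0 ≤ bnd x := by
  have h2 := gmom_nonneg (v := 1/2) (by norm_num) x.2.1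
  have h3 := gmom_nonneg (v := 1/3) (by norm_num) x.1
  unfold bnd; positivity

lemma tm_bound (n r p i : ℕ) (hn : 1 ≤ n) :
    tm (2 * n) (2 * r) p i / gmom 1 (2 * (3 * n)) ≤ bnd (2 * r, p, i) / n ^ r := by
  have hn' : (0 : ℝ) < n := by exact_mod_cast hn
  by_cases h : 2 * n < 2 * r + p + i
  · rw [tm_zero _ _ _ _ h, zero_div]
    exact div_nonneg (bnd_nonneg _) (by positivity)
  rw [not_lt] at h
  have h2 := gmom_nonneg (v := 1/2) (by norm_num) p
  have h3 := gmom_nonneg (v := 1/3) (by norm_num) (2 * r)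
  have hb := gmom_bound n (i + p + 3 * r) (by omega)
  have hd : ((2 * n).descFactorial (2 * r + p + i) : ℝ) ≤ (2 * n) ^ (2 * r + p + i) := by
    exact_mod_cast Nat.descFactorial_le_pow _ _
  rw [div_le_iff₀ (gmom_pos _), div_mul_eq_mul_div, le_div_iff₀ (by positivity)]
  have he : 3 * (2 * n - 2 * r - p - i) + i + p = 2 * (3 * n - (i + p + 3 * r)) := by omega
  rw [tm, choose_prod, he, bnd]
  simp only
  set G := gmom 1 (2 * (3 * n - (i + p + 3 * r))) with hG
  have hG0 : 0 ≤ G := gmom_nonneg zero_le_one _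
  set Q : ℝ := 3 ^ i * 6 ^ p * 6 ^ (2 * r) * gmom (1/2) p * gmom (1/3) (2 * r) /
    ((2 * r).factorial * p.factorial * i.factorial) with hQ
  have hQ0 : 0 ≤ Q := by positivity
  calc _ = Q * (((2 * n).descFactorial (2 * r + p + i) : ℝ) * (G * n ^ r)) := by
        rw [hQ]; field_simp
    _ ≤ Q * ((2 * n) ^ (2 * r + p + i) * (G * n ^ r)) := by gcongr
    _ = Q * (2 ^ (2 * r + p + i) * (G * n ^ (i + p + 3 * r))) := by
        rw [mul_pow]; ring
    _ ≤ Q * (2 ^ (2 * r + p + i) * gmom 1 (2 * (3 * n))) := by gcongr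
    _ = _ := by
        rw [hQ, show (12 : ℝ) = 2 * 6 by norm_num, mul_pow, mul_pow]
        rw [show (6 : ℝ) ^ i = 2 ^ i * 3 ^ i by rw [← mul_pow]; norm_num]
        rw [pow_add, pow_add]
        field_simp

noncomputable def lm (x : ℕ × ℕ × ℕ) : ℝ :=
  (if x.1 = 0 then 1 else 0) *
    ((2 ^ x.2.1 * gmom (1/2) x.2.1 / x.2.1.factorial) * (1 ^ x.2.2 / x.2.2.factorial))

lemma factor_tendsto (l : ℕ) :
    Tendsto (fun n : ℕ => ((2 * n : ℝ) - l) / (2 * ((3 * n : ℕ) : ℝ) - 2 * l - 1)) atTop (𝓝 (1/3)) := by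
  have h0 : Tendsto (fun n : ℕ => (1 : ℝ) / n) atTop (𝓝 0) := tendsto_one_div_atTop_nhds_zero_nat
  have h1 : Tendsto (fun n : ℕ => (2 - l * ((1 : ℝ) / n)) / (6 - (2 * l + 1) * ((1 : ℝ) / n))) atTop
      (𝓝 ((2 - l * 0) / (6 - (2 * l + 1) * 0))) := by
    apply Tendsto.div
    · exact tendsto_const_nhds.sub (h0.const_mul _)
    · exact tendsto_const_nhds.sub (h0.const_mul _)
    · norm_num
  norm_num at h1
  norm_num
  refine h1.congr' ?_
  filter_upwards [eventually_ge_atTop 1] with n hn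
  have hn' : (0 : ℝ) < n := by exact_mod_cast hn
  rw [← mul_div_mul_right _ _ hn'.ne']
  congr 1
  · field_simp
  · field_simp
    ring

lemma tm_tendsto (x : ℕ × ℕ × ℕ) :
    Tendsto (fun n : ℕ => tm (2 * n) x.1 x.2.1 x.2.2 / gmom 1 (2 * (3 * n))) atTop (𝓝 (lm x)) := by
  obtain ⟨s, p, i⟩ := x
  obtain ⟨r, hr | hr⟩ := Nat.even_or_odd' s
  · rcases Nat.eq_zero_or_pos r with h0 | h0
    · have hs : s = 0 := by omega
      subst hs
      have h1 : Tendsto (fun n : ℕ => (3 ^ i * 6 ^ p * gmom (1/2) p / (p.factorial * i.factorial)) *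
          ∏ l ∈ Finset.range (p + i), ((2 * n : ℝ) - l) / (2 * ((3 * n : ℕ) : ℝ) - 2 * l - 1)) atTop
          (𝓝 ((3 ^ i * 6 ^ p * gmom (1/2) p / (p.factorial * i.factorial)) *
            ∏ l ∈ Finset.range (p + i), (1/3))) :=
        (tendsto_finsetProd _ (fun l _ => factor_tendsto l)).const_mul _
      have h2 : (3 ^ i * 6 ^ p * gmom (1/2) p / (p.factorial * i.factorial)) *
            ∏ l ∈ Finset.range (p + i), (1/3 : ℝ) = lm (0, p, i) := by
        rw [lm, Finset.prod_const, Finset.card_range]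
        simp only [if_true, one_mul]
        rw [show (6 : ℝ) = 3 * 2 by norm_num, mul_pow, pow_add, div_pow, div_pow, one_pow]
        field_simp
      rw [← h2]
      refine h1.congr' ?_
      filter_upwards [eventually_ge_atTop (p + i)] with n hn
      have hp := gmom_pos (3 * n - (p + i))
      have he : 3 * (2 * n - 0 - p - i) + i + p = 2 * (3 * n - (p + i)) := by omega
      rw [tm, choose_prod, he, gmom_ratio (3 * n) (p + i) (by omega), Finset.prod_div_distrib,
        Nat.descFactorial_eq_prod_range, Nat.cast_prod]
      have h3 : ∏ l ∈ Finset.range (0 + p + i), ((2 * n - l : ℕ) : ℝ) =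
          ∏ l ∈ Finset.range (p + i), ((2 * n : ℝ) - l) := by
        rw [zero_add]
        apply Finset.prod_congr rfl
        intro l hl
        rw [Finset.mem_range] at hl
        rw [Nat.cast_sub (by omega)]
        push_cast; ring
      rw [h3]
      have h4 : (∏ l ∈ Finset.range (p + i), (2 * ((3 * n : ℕ) : ℝ) - 2 * l - 1)) ≠ 0 := by
        rw [Finset.prod_ne_zero_iff]
        intro l hl
        rw [Finset.mem_range] at hl
        have : ((l + 1 : ℕ) : ℝ) ≤ ((3 * n : ℕ) : ℝ) := by exact_mod_cast (by omega)
        push_cast at *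
        linarith
      simp only [gmom, Nat.factorial_zero, Nat.cast_one, one_mul, pow_zero, mul_one]
      field_simp
    · have hl : lm (s, p, i) = 0 := by
        rw [lm]; simp only
        rw [if_neg (by omega), zero_mul]
      rw [hl]
      have h1 : Tendsto (fun n : ℕ => bnd (2 * r, p, i) / (n : ℝ) ^ r) atTop (𝓝 0) := by
        apply Tendsto.const_div_atTop
        exact (tendsto_pow_atTop h0.ne').comp tendsto_natCast_atTop_atTop
      refine squeeze_zero' ?_ ?_ h1
      · exact Eventually.of_forall fun n => div_nonneg (tm_nonneg _ _ _ _) (gmom_pos _).le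
      · filter_upwards [eventually_ge_atTop 1] with n hn
        simp only [hr]
        exact tm_bound n r p i hn
  · have hl : lm (s, p, i) = 0 := by
      rw [lm]; simp only
      rw [if_neg (by omega), zero_mul]
    rw [hl]
    simp only [hr, tm_odd, zero_div]
    exact tendsto_const_nhds

lemma exp_hasSum (c : ℝ) : HasSum (fun n : ℕ => c ^ n / n.factorial) (Real.exp c) := by
  have h := NormedSpace.expSeries_div_hasSum_exp c
  rwa [← Real.exp_eq_exp_ℝ] at h

lemma bnd_summable : Summable bnd := by
  have h1 := (gmom_hasSum (1/3) 12).summable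
  have h2 := (gmom_hasSum (1/2) 12).summable
  have h3 := (exp_hasSum 6).summable
  have n1 : ∀ n : ℕ, 0 ≤ (12 : ℝ) ^ n * gmom (1/3) n / n.factorial := fun n => by
    have := gmom_nonneg (v := 1/3) (by norm_num) n
    positivity
  have n2 : ∀ n : ℕ, 0 ≤ (12 : ℝ) ^ n * gmom (1/2) n / n.factorial := fun n => by
    have := gmom_nonneg (v := 1/2) (by norm_num) n
    positivity
  have n3 : ∀ n : ℕ, 0 ≤ (6 : ℝ) ^ n / n.factorial := fun n => by positivity
  exact h1.mul_of_nonneg (h2.mul_of_nonneg h3 n2 n3) n1 (fun x => mul_nonneg (n2 _) (n3 _))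

lemma lm_tsum : ∑' x, lm x = Real.exp 2 := by
  have h1 : HasSum (fun s : ℕ => if s = 0 then (1 : ℝ) else 0) 1 := hasSum_ite_eq 0 1
  have h2 := gmom_hasSum (1/2) 2
  have h3 := exp_hasSum 1
  have n1 : ∀ s : ℕ, 0 ≤ if s = 0 then (1 : ℝ) else 0 := fun s => by split_ifs <;> norm_num
  have n2 : ∀ n : ℕ, 0 ≤ (2 : ℝ) ^ n * gmom (1/2) n / n.factorial := fun n => by
    have := gmom_nonneg (v := 1/2) (by norm_num) n
    positivity
  have n3 : ∀ n : ℕ, 0 ≤ (1 : ℝ) ^ n / n.factorial := fun n => by positivity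
  have h23 := h2.mul h3 (h2.summable.mul_of_nonneg h3.summable n2 n3)
  have h := h1.mul h23 (h1.summable.mul_of_nonneg h23.summable n1
    (fun x => mul_nonneg (n2 _) (n3 _)))
  have : (1 : ℝ) * (Real.exp (2 ^ 2 * (1/2) / 2) * Real.exp 1) = Real.exp 2 := by
    rw [one_mul, ← Real.exp_add]; norm_num
  rw [← this]
  exact h.tsum_eq

lemma main_tendsto : Tendsto (fun n : ℕ => 6 ^ (2 * n) * EE (ff 3 ^ (2 * n)) / gmom 1 (6 * n))
    atTop (𝓝 (Real.exp 2)) := by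
  rw [← lm_tsum]
  have h := tendsto_tsum_of_dominated_convergence (𝓕 := atTop) bnd_summable
    (f := fun (n : ℕ) (x : ℕ × ℕ × ℕ) => tm (2 * n) x.1 x.2.1 x.2.2 / gmom 1 (2 * (3 * n)))
    (g := lm) tm_tendsto ?_
  · refine h.congr ?_
    intro n
    rw [EE_expand, show 6 * n = 2 * (3 * n) by ring]
    rw [tsum_eq_sum (s := Finset.range (2 * n + 1) ×ˢ (Finset.range (2 * n + 1) ×ˢ
      Finset.range (2 * n + 1)))]
    · simp only [Finset.sum_product, Finset.sum_div]
    · rintro ⟨s, p, i⟩ hx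
      simp only [Finset.mem_product, Finset.mem_range] at hx
      simp only
      rw [tm_zero _ _ _ _ (by omega), zero_div]
  · filter_upwards [eventually_ge_atTop 1] with n hn
    rintro ⟨s, p, i⟩
    simp only
    rw [Real.norm_of_nonneg (div_nonneg (tm_nonneg _ _ _ _) (gmom_pos _).le)]
    obtain ⟨r, rfl | rfl⟩ := Nat.even_or_odd' s
    · refine (tm_bound n r p i hn).trans ?_
      apply div_le_self (bnd_nonneg _)
      apply one_le_pow₀
      exact_mod_cast hn
    · rw [tm_odd, zero_div]; exact bnd_nonneg _

theorem labelled_cubic_multigraph_count :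
    (∀ N : ℕ, Even N →
      Nat.card (Omega N) =
        Nat.factorial (3 * N) / (2 ^ (3 * N / 2) * Nat.factorial (3 * N / 2))) ∧
    Tendsto
      (fun N : ℕ =>
        (Nat.card {m : Fin N → Fin N → ℕ // IsCubic m} : ℝ) * 6 ^ N /
          (Real.exp 2 * (Nat.card (Omega N) : ℝ)))
      (atTop ⊓ 𝓟 {N : ℕ | Even N}) (𝓝 1) := by
  refine ⟨omega_card, ?_⟩
  have h1 := main_tendsto.div_const (Real.exp 2)
  rw [div_self (Real.exp_pos 2).ne'] at h1
  have h2 : Tendsto (fun N : ℕ => N / 2) (atTop ⊓ 𝓟 {N : ℕ | Even N}) atTop :=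
    (Nat.tendsto_div_const_atTop two_ne_zero).mono_left inf_le_left
  refine (h1.comp h2).congr' ?_
  have h3 : ∀ᶠ N : ℕ in atTop ⊓ 𝓟 {N : ℕ | Even N}, Even N :=
    mem_inf_of_right (mem_principal_self _)
  filter_upwards [h3] with N hN
  obtain ⟨n, rfl⟩ := hN
  rw [← two_mul]
  simp only [Function.comp]
  rw [Nat.mul_div_cancel_left _ two_pos, cubic_card, omega_card_real, div_div]
  congr 1
  · ring
  · ring
end
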